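/- arXiv:1609.04154 — 6 statements merged into one kernel-verified Lean document; each statement's English description precedes it below -/
import Mathlib

section
/- Up to the Weyl group W(D₆) there are exactly two primitive embeddings of the root lattice A₅ into the root lattice D₆ (existence part): for every injective ℤ-linear map φ : A₅ → D₆ that preserves the bilinear form and whose image is a primitive submodule of D₆, there exists an element w ∈ W(D₆) such that w(φ(A₅)) = i₁(A₅) or w(φ(A₅)) = i₂(A₅). -/
noncomputable section

abbrev V6 : Type := Fin 6 → ℚ

/-- The standard bilinear form on `ℚ⁶`. -/
def bil6 (x y : V6) : ℚ := ∑ i, x i * y i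

def d1 : V6 := ![1, -1, 0, 0, 0, 0]
def d2 : V6 := ![0, 1, -1, 0, 0, 0]
def d3 : V6 := ![0, 0, 1, -1, 0, 0]
def d4 : V6 := ![0, 0, 0, 1, -1, 0]
def d5 : V6 := ![0, 0, 0, 0, 1, -1]
def d6 : V6 := ![0, 0, 0, 0, 1, 1]

/-- The `D₆` root lattice: integer vectors with even coordinate sum. -/
def D6 : Submodule ℤ V6 where
  carrier := {x | (∀ i, ∃ m : ℤ, x i = (m : ℚ)) ∧ ∃ k : ℤ, (∑ i, x i) = 2 * (k : ℚ)}
  add_mem' := by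
    rintro x y ⟨hx1, kx, hx2⟩ ⟨hy1, ky, hy2⟩
    refine ⟨fun i => ?_, kx + ky, ?_⟩
    · obtain ⟨m, hm⟩ := hx1 i
      obtain ⟨m', hm'⟩ := hy1 i
      exact ⟨m + m', by push_cast [Pi.add_apply, hm, hm']; ring⟩
    · have : (∑ i, (x + y) i) = (∑ i, x i) + ∑ i, y i := by
        simp [Pi.add_apply, Finset.sum_add_distrib]
      rw [this, hx2, hy2]; push_cast; ring
  zero_mem' := ⟨fun i => ⟨0, by simp⟩, 0, by simp⟩
  smul_mem' := by
    rintro c x ⟨hx1, k, hx2⟩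
    refine ⟨fun i => ?_, c * k, ?_⟩
    · obtain ⟨m, hm⟩ := hx1 i
      refine ⟨c * m, ?_⟩
      have : (c • x) i = (c : ℚ) * x i := by simp [Pi.smul_apply, zsmul_eq_mul]
      rw [this, hm]; push_cast; ring
    · have : (∑ i, (c • x) i) = (c : ℚ) * ∑ i, x i := by
        simp [Pi.smul_apply, zsmul_eq_mul, Finset.mul_sum]
      rw [this, hx2]; push_cast; ring

/-- The first embedding `i₁(A₅) ⊂ D₆`, spanned by `d₁,…,d₅`. -/
def i1A5 : Submodule ℤ V6 := Submodule.span ℤ {d1, d2, d3, d4, d5}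

/-- The second embedding `i₂(A₅) ⊂ D₆`, spanned by `d₁,…,d₄,d₆`. -/
def i2A5 : Submodule ℤ V6 := Submodule.span ℤ {d1, d2, d3, d4, d6}

/-- The Weyl group `W(D₆)`: the subgroup of linear automorphisms of `ℚ⁶` generated by
the reflections in the roots (norm-`2` vectors) of `D₆`. -/
def WeylD6 : Subgroup (V6 ≃ₗ[ℚ] V6) :=
  Subgroup.closure {s | ∃ r ∈ (D6 : Set V6), bil6 r r = 2 ∧ ∀ x, s x = x - bil6 x r • r}


/-- The `A₅` root lattice: integer vectors in `ℚ⁶` with coordinate sum zero. -/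
def A5 : Submodule ℤ V6 where
  carrier := {x | (∀ i, ∃ m : ℤ, x i = (m : ℚ)) ∧ (∑ i, x i) = 0}
  add_mem' := by
    rintro x y ⟨hx1, hx2⟩ ⟨hy1, hy2⟩
    refine ⟨fun i => ?_, ?_⟩
    · obtain ⟨m, hm⟩ := hx1 i
      obtain ⟨m', hm'⟩ := hy1 i
      exact ⟨m + m', by push_cast [Pi.add_apply, hm, hm']; ring⟩
    · have : (∑ i, (x + y) i) = (∑ i, x i) + ∑ i, y i := by
        simp [Pi.add_apply, Finset.sum_add_distrib]
      rw [this, hx2, hy2]; ring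
  zero_mem' := ⟨fun i => ⟨0, by simp⟩, by simp⟩
  smul_mem' := by
    rintro c x ⟨hx1, hx2⟩
    refine ⟨fun i => ?_, ?_⟩
    · obtain ⟨m, hm⟩ := hx1 i
      refine ⟨c * m, ?_⟩
      have : (c • x) i = (c : ℚ) * x i := by simp [Pi.smul_apply, zsmul_eq_mul]
      rw [this, hm]; push_cast; ring
    · have : (∑ i, (c • x) i) = (c : ℚ) * ∑ i, x i := by
        simp [Pi.smul_apply, zsmul_eq_mul, Finset.mul_sum]
      rw [this, hx2]; ring

/-!
The images of the simple roots of `A₅` are five integral vectors with Gram matrix `A₅`. Such a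
chain of roots consists of the consecutive differences `fᵢ - fᵢ₊₁` of an orthonormal frame of
integral vectors: adding the roots one at a time, orthogonality and Bessel's inequality leave the
next root with coefficients `0, …, 0, 1` in the frame found so far, which then extends, or
`-1, …, -1, 0`, which needs a chain of at most three roots. For two roots the frame can be
corrected by a sign; for three roots this is `A₃ = D₃`, and parity forbids a fourth root.
Reflections in `u - t`, for orthogonal integral unit vectors `u` and `t`, let `W(D₆)` carry the
frame to the standard basis up to the sign of the last vector, and that sign separates `i₁(A₅)`
from `i₂(A₅)`.
-/

open Matrix

section DotProduct

variable {R ι κ : Type*} [Fintype ι] [CommRing R] [LinearOrder R] [IsStrictOrderedRing R]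

lemma dotProduct_self_nonneg (x : ι → R) : 0 ≤ x ⬝ᵥ x :=
  Finset.sum_nonneg fun i _ => mul_self_nonneg (x i)

lemma eq_of_dotProduct_eq {x y : ι → R} {c : R} (hx : x ⬝ᵥ x = c) (hy : y ⬝ᵥ y = c)
    (hxy : x ⬝ᵥ y = c) : x = y := by
  refine sub_eq_zero.1 (dotProduct_self_eq_zero.1 ?_)
  simp only [sub_dotProduct, dotProduct_sub, dotProduct_comm y x, hx, hy, hxy, sub_self]

lemma sum_sq_dotProduct_le [Fintype κ] [DecidableEq κ] {f : κ → ι → R}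
    (hf : ∀ i j, f i ⬝ᵥ f j = (1 : Matrix κ κ R) i j) (x : ι → R) :
    ∑ i, (f i ⬝ᵥ x) ^ 2 ≤ x ⬝ᵥ x := by
  have h := dotProduct_self_nonneg (x - ∑ i, (f i ⬝ᵥ x) • f i)
  simp only [sub_dotProduct, dotProduct_sub, sum_dotProduct, dotProduct_sum, smul_dotProduct,
    dotProduct_smul, hf, one_apply, smul_eq_mul, mul_ite, mul_one, mul_zero,
    Finset.sum_ite_eq', Finset.mem_univ, if_true, dotProduct_comm x, sub_self] at h
  simpa only [pow_two, Finset.sum_const_zero, sub_zero, sub_nonneg] using h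

end DotProduct

section IntegerLattice

variable {ι : Type*} [Fintype ι]

/-- The lattice `ℤ^ι` of integral vectors, as a `ℤ`-submodule of `ℚ^ι`; here
`1 : Submodule ℤ ℚ` is the image of `ℤ` in `ℚ`. -/
def integerLattice (ι : Type*) : Submodule ℤ (ι → ℚ) := Submodule.pi Set.univ fun _ => 1

lemma mem_integerLattice {ι : Type*} {x : ι → ℚ} :
    x ∈ integerLattice ι ↔ ∀ i, ∃ m : ℤ, x i = m := by
  simp [integerLattice, Submodule.mem_pi, Submodule.mem_one, eq_comm]

lemma single_mem_integerLattice {ι : Type*} [DecidableEq ι] (i : ι) (m : ℤ) :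
    Pi.single i (m : ℚ) ∈ integerLattice ι := by
  refine mem_integerLattice.2 fun j => ⟨(Pi.single i m : ι → ℤ) j, ?_⟩
  obtain rfl | hij := eq_or_ne j i
  · simp
  · simp [hij]

lemma exists_dotProduct_eq_intCast {x y : ι → ℚ} (hx : x ∈ integerLattice ι)
    (hy : y ∈ integerLattice ι) : ∃ m : ℤ, x ⬝ᵥ y = m := by
  choose a ha using mem_integerLattice.1 hx
  choose b hb using mem_integerLattice.1 hy
  exact ⟨∑ i, a i * b i, by simp [dotProduct, ha, hb]⟩

lemma eq_or_eq_neg_or_dotProduct_eq_zero {x y : ι → ℚ} (hx : x ∈ integerLattice ι)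
    (hy : y ∈ integerLattice ι) (hxx : x ⬝ᵥ x = 1) (hyy : y ⬝ᵥ y = 1) :
    x = y ∨ x = -y ∨ x ⬝ᵥ y = 0 := by
  obtain ⟨m, hm⟩ := exists_dotProduct_eq_intCast hx hy
  have hsub := dotProduct_self_nonneg (x - y)
  have hadd := dotProduct_self_nonneg (x + y)
  simp only [sub_dotProduct, dotProduct_sub, add_dotProduct, dotProduct_add,
    dotProduct_comm y x, hxx, hyy, hm] at hsub hadd
  have hle : m ≤ 1 := by exact_mod_cast (by linarith : (m : ℚ) ≤ 1)
  have hge : -1 ≤ m := by exact_mod_cast (by linarith : (-1 : ℚ) ≤ m)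
  obtain rfl | rfl | rfl : m = 1 ∨ m = -1 ∨ m = 0 := by omega
  · exact Or.inl (eq_of_dotProduct_eq hxx hyy (by simpa using hm))
  · exact Or.inr (Or.inl (eq_of_dotProduct_eq hxx (by simpa using hyy) (by simp [hm])))
  · exact Or.inr (Or.inr (by simpa using hm))

lemma exists_mem_integerLattice_dotProduct_eq_one {v : ι → ℚ} (hv : v ∈ integerLattice ι)
    (hvv : v ⬝ᵥ v = 2) : ∃ u ∈ integerLattice ι, u ⬝ᵥ u = 1 ∧ u ⬝ᵥ v = 1 := by
  classical
  choose m hm using mem_integerLattice.1 hv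
  obtain ⟨i, hi⟩ : ∃ i, m i ≠ 0 := by
    by_contra! h
    simp [dotProduct, hm, h] at hvv
  have hsq : m i * m i ≤ 2 := by
    have : v i * v i ≤ v ⬝ᵥ v :=
      Finset.single_le_sum (f := fun j => v j * v j) (fun j _ => mul_self_nonneg (v j))
        (Finset.mem_univ i)
    rw [hvv, hm] at this
    exact_mod_cast this
  have hone : m i * m i = 1 := by
    obtain h | h : m i = 1 ∨ m i = -1 := by
      have h₁ : -1 ≤ m i := by nlinarith
      have h₂ : m i ≤ 1 := by nlinarith
      omega
    all_goals simp [h]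
  have hone' : (m i : ℚ) * m i = 1 := by exact_mod_cast hone
  exact ⟨Pi.single i (m i : ℚ), single_mem_integerLattice i (m i), by simp [hone'],
    by simp [hm, hone']⟩

end IntegerLattice

section Realization

variable {ι κ : Type*} [Fintype ι] {n : ℕ}

/-- The integral vectors `v i` have Gram matrix `G`. An orthonormal frame of integral vectors is
the case `G = 1`, and a copy of the simple roots of `Aₙ` is the case `G = CartanMatrix.A n`. -/
structure IsRealization (G : Matrix κ κ ℤ) (v : κ → ι → ℚ) : Prop where
  mem : ∀ i, v i ∈ integerLattice ι
  dotProduct_eq : ∀ i j, v i ⬝ᵥ v j = G i j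

/-- The differences `f i - f (i + 1)`. For `f` the standard basis these are the simple roots of
type `A`. -/
def consecutiveDiff {M : Type*} [AddGroup M] (f : Fin (n + 1) → M) (i : Fin n) : M :=
  f i.castSucc - f i.succ

lemma isRealization_consecutiveDiff {f : Fin (n + 1) → ι → ℚ} (hf : IsRealization 1 f) :
    IsRealization (CartanMatrix.A n) (consecutiveDiff f) := by
  refine ⟨fun i => sub_mem (hf.mem _) (hf.mem _), fun i j => ?_⟩
  simp only [consecutiveDiff, sub_dotProduct, dotProduct_sub, hf.dotProduct_eq, one_apply,
    CartanMatrix.A, of_apply, Fin.ext_iff, Fin.val_castSucc, Fin.val_succ]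
  split_ifs <;> first | omega | norm_num

namespace IsRealization

lemma dotProduct_self [DecidableEq κ] {f : κ → ι → ℚ} (hf : IsRealization 1 f) (i : κ) :
    f i ⬝ᵥ f i = 1 := by
  simp [hf.dotProduct_eq]

lemma dotProduct_of_ne [DecidableEq κ] {f : κ → ι → ℚ} (hf : IsRealization 1 f) {i j : κ}
    (hij : i ≠ j) : f i ⬝ᵥ f j = 0 := by
  simp [hf.dotProduct_eq, hij]

lemma dotProduct_self_eq_two {v : Fin n → ι → ℚ} (hv : IsRealization (CartanMatrix.A n) v)
    (i : Fin n) : v i ⬝ᵥ v i = 2 := by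
  simp [hv.dotProduct_eq, CartanMatrix.A]

lemma init {v : Fin (n + 1) → ι → ℚ} (hv : IsRealization (CartanMatrix.A (n + 1)) v) :
    IsRealization (CartanMatrix.A n) (Fin.init v) :=
  ⟨fun i => hv.mem _, fun i j => by
    simp [Fin.init, hv.dotProduct_eq, CartanMatrix.A, Fin.ext_iff]⟩

lemma snoc {f : Fin n → ι → ℚ} (hf : IsRealization 1 f) {u : ι → ℚ} (hu : u ∈ integerLattice ι)
    (huu : u ⬝ᵥ u = 1) (hfu : ∀ i, f i ⬝ᵥ u = 0) :
    IsRealization 1 (Fin.snoc f u : Fin (n + 1) → ι → ℚ) := by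
  refine ⟨Fin.forall_fin_succ'.2 ⟨fun i => ?_, ?_⟩, Fin.forall_fin_succ'.2
    ⟨fun i => Fin.forall_fin_succ'.2 ⟨fun j => ?_, ?_⟩, Fin.forall_fin_succ'.2 ⟨fun j => ?_, ?_⟩⟩⟩
  · simpa using hf.mem i
  · simpa using hu
  · simp [hf.dotProduct_eq, one_apply]
  · simp [hfu]
  · simp [dotProduct_comm u, hfu, one_apply, (Fin.castSucc_lt_last j).ne']
  · simp [huu]

/-- Appending `f n - v n` to the frame accounts for one more root `v n`. -/
lemma exists_eq_consecutiveDiff_of_init {v : Fin (n + 1) → ι → ℚ}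
    (hv : IsRealization (CartanMatrix.A (n + 1)) v) {f : Fin (n + 1) → ι → ℚ}
    (hf : IsRealization 1 f) (hvf : Fin.init v = consecutiveDiff f)
    (hlast : f (Fin.last n) ⬝ᵥ v (Fin.last n) = 1)
    (horth : ∀ i : Fin n, f i.castSucc ⬝ᵥ v (Fin.last n) = 0) :
    ∃ g : Fin (n + 2) → ι → ℚ, IsRealization 1 g ∧ v = consecutiveDiff g := by
  refine ⟨Fin.snoc f (f (Fin.last n) - v (Fin.last n)),
    hf.snoc (sub_mem (hf.mem _) (hv.mem _)) ?_ (Fin.forall_fin_succ'.2 ⟨fun i => ?_, ?_⟩),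
    funext (Fin.forall_fin_succ'.2 ⟨fun i => ?_, ?_⟩)⟩
  · simp only [sub_dotProduct, dotProduct_sub, hf.dotProduct_self, hlast, hv.dotProduct_self_eq_two,
      dotProduct_comm (v _) (f _)]
    norm_num
  · rw [dotProduct_sub, horth, hf.dotProduct_of_ne (Fin.castSucc_lt_last i).ne, sub_zero]
  · rw [dotProduct_sub, hf.dotProduct_self, hlast, sub_self]
  · rw [show v i.castSucc = _ from congrFun hvf i]
    simp only [consecutiveDiff, Fin.snoc_castSucc, Fin.succ_castSucc]
  · simp only [consecutiveDiff, Fin.snoc_castSucc, Fin.succ_last, Fin.snoc_last, sub_sub_cancel]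

/-- The coefficients of the next root in the frame: all but the last one agree, as the root is
orthogonal to `v i = f i - f (i + 1)` for `i < n - 1`, and Bessel bounds them. -/
lemma exists_coefficients {v : Fin (n + 1) → ι → ℚ}
    (hv : IsRealization (CartanMatrix.A (n + 1)) v) {f : Fin (n + 1) → ι → ℚ}
    (hf : IsRealization 1 f) (hvf : Fin.init v = consecutiveDiff f) :
    ∃ c : ℤ, (∀ i : Fin n, f i.castSucc ⬝ᵥ v (Fin.last n) = c) ∧
      f (Fin.last n) ⬝ᵥ v (Fin.last n) = c + 1 ∧ n * c ^ 2 + (c + 1) ^ 2 ≤ 2 := by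
  obtain ⟨m, hm⟩ := exists_dotProduct_eq_intCast (hf.mem (Fin.last n)) (hv.mem (Fin.last n))
  have hdiff (i : Fin n) : f i.castSucc ⬝ᵥ v (Fin.last n) - f i.succ ⬝ᵥ v (Fin.last n) =
      if i.succ = Fin.last n then -1 else 0 := by
    rw [← sub_dotProduct, show f i.castSucc - f i.succ = v i.castSucc from (congrFun hvf i).symm,
      hv.dotProduct_eq]
    simp only [CartanMatrix.A, of_apply, Fin.ext_iff, Fin.val_castSucc, Fin.val_succ, Fin.val_last]
    split_ifs <;> first | omega | norm_num
  have hcoeff (i : Fin (n + 1)) :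
      f i ⬝ᵥ v (Fin.last n) = (m - 1 : ℤ) + if i = Fin.last n then 1 else 0 := by
    induction i using Fin.reverseInduction with
    | last => simp [hm]
    | cast i ih =>
      have := hdiff i
      rw [ih] at this
      simp only [(Fin.castSucc_lt_last i).ne, if_false]
      split_ifs at this <;> linarith
  have hbessel := sum_sq_dotProduct_le
    (fun i j => by simp [hf.dotProduct_eq, one_apply]) (v (Fin.last n)) (f := f)
  refine ⟨m - 1, fun i => ?_, ?_, ?_⟩
  · simp [hcoeff, (Fin.castSucc_lt_last i).ne]
  · simp [hcoeff]
  · simp only [hcoeff, hv.dotProduct_self_eq_two, Fin.sum_univ_castSucc,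
      (Fin.castSucc_lt_last _).ne, if_false, if_true, add_zero, Finset.sum_const,
      Finset.card_univ, Fintype.card_fin, nsmul_eq_mul] at hbessel
    exact_mod_cast hbessel

/-- Here `c = 0` extends the frame and `c = -1` turns the bound of `exists_coefficients` into
`n ≤ 2`. -/
lemma exists_frame_or_coefficients (hn : 1 ≤ n) {v : Fin (n + 1) → ι → ℚ}
    (hv : IsRealization (CartanMatrix.A (n + 1)) v) {f : Fin (n + 1) → ι → ℚ}
    (hf : IsRealization 1 f) (hvf : Fin.init v = consecutiveDiff f) :
    (∃ g : Fin (n + 2) → ι → ℚ, IsRealization 1 g ∧ v = consecutiveDiff g) ∨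
      n ≤ 2 ∧ (∀ i : Fin n, f i.castSucc ⬝ᵥ v (Fin.last n) = -1) ∧
        f (Fin.last n) ⬝ᵥ v (Fin.last n) = 0 := by
  obtain ⟨c, hc, hlast, hle⟩ := hv.exists_coefficients hf hvf
  have hn' : (1 : ℤ) ≤ n := by exact_mod_cast hn
  obtain rfl | rfl : c = 0 ∨ c = -1 := by
    have hge : -1 ≤ c := by
      by_contra!
      nlinarith [hn']
    have hle : c ≤ 0 := by
      by_contra!
      nlinarith [hn']
    omega
  · exact Or.inl <| hv.exists_eq_consecutiveDiff_of_init hf hvf (by simpa using hlast)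
      (by simpa using hc)
  · exact Or.inr ⟨by simpa using hle, by simpa using hc, by simpa using hlast⟩

lemma exists_frame_one {v : Fin 1 → ι → ℚ} (hv : IsRealization (CartanMatrix.A 1) v) :
    ∃ f : Fin 2 → ι → ℚ, IsRealization 1 f ∧ v = consecutiveDiff f := by
  obtain ⟨u, hu, huu, huv⟩ := exists_mem_integerLattice_dotProduct_eq_one (hv.mem 0)
    (hv.dotProduct_self_eq_two 0)
  have hf : IsRealization 1 (fun _ : Fin 1 => u) :=
    ⟨fun _ => hu, fun i j => by simp [huu, one_apply, eq_iff_true_of_subsingleton]⟩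
  exact hv.exists_eq_consecutiveDiff_of_init hf (Subsingleton.elim _ _) huv finZeroElim

/-- If the second root has coefficients `-1, 0` in the frame `(f₀, f₁)`, replace the frame by
`(-f₁, -f₀)`, which has the same difference. -/
lemma exists_frame_two {v : Fin 2 → ι → ℚ} (hv : IsRealization (CartanMatrix.A 2) v) :
    ∃ f : Fin 3 → ι → ℚ, IsRealization 1 f ∧ v = consecutiveDiff f := by
  obtain ⟨f, hf, hvf⟩ := hv.init.exists_frame_one
  obtain hv' | ⟨-, h0, h1⟩ := hv.exists_frame_or_coefficients le_rfl hf hvf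
  · exact hv'
  have hg : IsRealization 1 (fun i : Fin 2 => -f i.rev) :=
    ⟨fun i => neg_mem (hf.mem _), fun i j => by simp [hf.dotProduct_eq, one_apply]⟩
  refine hv.exists_eq_consecutiveDiff_of_init hg (hvf.trans (funext fun i => ?_)) ?_ fun i => ?_
  · simp only [consecutiveDiff, Fin.rev_castSucc, Fin.rev_succ, Subsingleton.elim i.rev i]
    abel
  · simpa [neg_eq_iff_eq_neg] using h0 0
  · simpa [Subsingleton.elim i 0] using h1

/-- A root with coefficients `-1, -1, 0` in the frame, that is `-f₀ - f₁`, has even product with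
every integral vector orthogonal to `f₀ - f₁`, so no fourth root can follow it. -/
lemma exists_frame_three {v : Fin 4 → ι → ℚ} (hv : IsRealization (CartanMatrix.A 4) v) :
    ∃ f : Fin 4 → ι → ℚ, IsRealization 1 f ∧ Fin.init v = consecutiveDiff f := by
  obtain ⟨f, hf, hvf⟩ := hv.init.init.exists_frame_two
  obtain hv' | ⟨-, hcoeff, -⟩ := hv.init.exists_frame_or_coefficients one_le_two hf hvf
  · exact hv'
  exfalso
  have h0 : v 0 = f 0 - f 1 := congrFun hvf 0
  have h2 : v 2 = -f 0 - f 1 := by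
    have hf0 : f 0 ⬝ᵥ v 2 = -1 := hcoeff 0
    have hf1 : f 1 ⬝ᵥ v 2 = -1 := hcoeff 1
    refine eq_of_dotProduct_eq (hv.dotProduct_self_eq_two 2) ?_ ?_
    · norm_num [hf.dotProduct_eq]
    · norm_num [dotProduct_comm (v 2), hf0, hf1]
  obtain ⟨m, hm⟩ := exists_dotProduct_eq_intCast (hf.mem 0) (hv.mem 3)
  have h03 : f 0 ⬝ᵥ v 3 - f 1 ⬝ᵥ v 3 = 0 := by
    rw [← sub_dotProduct, ← h0, hv.dotProduct_eq]
    simp [CartanMatrix.A]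
  have h23 : -(f 0 ⬝ᵥ v 3) - f 1 ⬝ᵥ v 3 = -1 := by
    rw [← neg_dotProduct, ← sub_dotProduct, ← h2, hv.dotProduct_eq]
    simp [CartanMatrix.A]
  have : 2 * m = 1 := by exact_mod_cast (by linarith : (2 * m : ℚ) = 1)
  omega

/-- The bound on `n` excludes `A₃ = D₃`, whose roots `e₀ - e₁`, `e₁ - e₂`, `-e₀ - e₁` are not
consecutive differences of a frame. -/
theorem exists_frame (hn : 4 ≤ n) {v : Fin n → ι → ℚ}
    (hv : IsRealization (CartanMatrix.A n) v) :
    ∃ f : Fin (n + 1) → ι → ℚ, IsRealization 1 f ∧ v = consecutiveDiff f := by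
  induction n, hn using Nat.le_induction with
  | base =>
    obtain ⟨f, hf, hvf⟩ := hv.exists_frame_three
    exact (hv.exists_frame_or_coefficients (by omega) hf hvf).resolve_right (by omega)
  | succ k hk ih =>
    obtain ⟨f, hf, hvf⟩ := ih hv.init
    exact (hv.exists_frame_or_coefficients (by omega) hf hvf).resolve_right (by omega)

end IsRealization

end Realization

section StandardBasis

variable {ι : Type*} [DecidableEq ι] {n : ℕ}

/-- The standard basis vector `eᵢ` of `ℚ^ι`. -/
def stdVec (i : ι) : ι → ℚ := Pi.single i 1

lemma isRealization_stdVec [Fintype ι] : IsRealization 1 (stdVec : ι → ι → ℚ) :=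
  ⟨fun i => by simpa only [stdVec, Int.cast_one] using single_mem_integerLattice i 1,
    fun i j => by simp [stdVec, one_apply, Pi.single_apply, eq_comm]⟩

lemma stdVec_sub_last_mem_span (i : Fin (n + 1)) :
    stdVec i - stdVec (Fin.last n) ∈ Submodule.span ℤ (Set.range (consecutiveDiff stdVec)) := by
  induction i using Fin.reverseInduction with
  | last => simp
  | cast i ih =>
    rw [← sub_add_sub_cancel _ (stdVec i.succ)]
    exact add_mem (Submodule.subset_span ⟨i, rfl⟩) ih

lemma mem_span_consecutiveDiff_stdVec {x : Fin (n + 1) → ℚ}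
    (hx : x ∈ integerLattice (Fin (n + 1))) (hsum : ∑ i, x i = 0) :
    x ∈ Submodule.span ℤ (Set.range (consecutiveDiff stdVec)) := by
  choose m hm using mem_integerLattice.1 hx
  have hx_eq : x = ∑ i, m i • (stdVec i - stdVec (Fin.last n)) := by
    have hm_sum : ∑ i, m i = 0 := by
      simp only [hm] at hsum
      exact_mod_cast hsum
    simp only [smul_sub, Finset.sum_sub_distrib, ← Finset.sum_smul, hm_sum, zero_smul, sub_zero]
    funext j
    simp [stdVec, Pi.single_apply, hm]
  rw [hx_eq]
  exact sum_mem fun i _ => Submodule.smul_mem _ _ (stdVec_sub_last_mem_span i)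

lemma IsRealization.last_eq_or_eq_neg {e : Fin (n + 1) → Fin (n + 1) → ℚ}
    (he : IsRealization 1 e) (hstd : ∀ i : Fin n, e i.castSucc = stdVec i.castSucc) :
    e (Fin.last n) = stdVec (Fin.last n) ∨ e (Fin.last n) = -stdVec (Fin.last n) := by
  have hzero (i : Fin n) : e (Fin.last n) i.castSucc = 0 := by
    have := he.dotProduct_of_ne (Fin.castSucc_lt_last i).ne
    simpa [hstd, stdVec] using this
  have heq : e (Fin.last n) = e (Fin.last n) (Fin.last n) • stdVec (Fin.last n) :=
    funext (Fin.forall_fin_succ'.2 ⟨fun i => by simp [hzero, stdVec], by simp [stdVec]⟩)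
  have hsq : e (Fin.last n) (Fin.last n) * e (Fin.last n) (Fin.last n) = 1 := by
    simpa [dotProduct, Fin.sum_univ_castSucc, hzero] using he.dotProduct_self (Fin.last n)
  obtain h | h := mul_self_eq_one_iff.1 hsq
  · exact Or.inl (by rw [heq, h, one_smul])
  · exact Or.inr (by rw [heq, h, neg_one_smul])

end StandardBasis

section WeylGroup

lemma bil6_eq_dotProduct (x y : V6) : bil6 x y = x ⬝ᵥ y := rfl

lemma mem_integerLattice_of_mem_D6 {x : V6} (hx : x ∈ D6) : x ∈ integerLattice (Fin 6) :=
  mem_integerLattice.2 hx.1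

/-- The coordinate sum of an integral vector has the parity of its norm. -/
lemma mem_D6_of_dotProduct_self_eq_two {x : V6} (hx : x ∈ integerLattice (Fin 6))
    (hxx : x ⬝ᵥ x = 2) : x ∈ D6 := by
  choose m hm using mem_integerLattice.1 hx
  have heven : Even (∑ i, m i * (m i - 1)) :=
    Finset.even_sum _ fun i _ => Int.even_mul_pred_self (m i)
  obtain ⟨k, hk⟩ := heven
  have hsq : ∑ i, m i * m i = 2 := by
    simp only [dotProduct, hm] at hxx
    exact_mod_cast hxx
  refine ⟨mem_integerLattice.1 hx, 1 - k, ?_⟩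
  simp only [mul_sub, mul_one, Finset.sum_sub_distrib, hsq] at hk
  simp only [hm]
  exact_mod_cast (by omega : ∑ i, m i = 2 * (1 - k))

/-- The reflection `x ↦ x - (r ⬝ᵥ x) • r` in a vector `r` of norm `2`. -/
def normTwoReflection {ι : Type*} [Fintype ι] (r : ι → ℚ) (hr : r ⬝ᵥ r = 2) :
    (ι → ℚ) ≃ₗ[ℚ] (ι → ℚ) :=
  Module.reflection (f := dotProductBilin ℚ ℚ r) hr

lemma normTwoReflection_apply {ι : Type*} [Fintype ι] {r : ι → ℚ} (hr : r ⬝ᵥ r = 2) (x : ι → ℚ) :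
    normTwoReflection r hr x = x - (r ⬝ᵥ x) • r :=
  rfl

lemma normTwoReflection_mem_weylD6 {r : V6} (hr : r ∈ integerLattice (Fin 6))
    (hrr : r ⬝ᵥ r = 2) : normTwoReflection r hrr ∈ WeylD6 :=
  Subgroup.subset_closure ⟨r, mem_D6_of_dotProduct_self_eq_two hr hrr, hrr, fun x => by
    rw [normTwoReflection_apply, bil6_eq_dotProduct, dotProduct_comm]⟩

lemma dotProduct_map_of_mem_weylD6 {w : V6 ≃ₗ[ℚ] V6} (hw : w ∈ WeylD6) (x y : V6) :
    w x ⬝ᵥ w y = x ⬝ᵥ y := by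
  induction hw using Subgroup.closure_induction generalizing x y with
  | mem s hs =>
    obtain ⟨r, -, hr, hs⟩ := hs
    rw [bil6_eq_dotProduct] at hr
    simp only [hs, bil6_eq_dotProduct, sub_dotProduct, dotProduct_sub, smul_dotProduct,
      dotProduct_smul, smul_eq_mul, dotProduct_comm r, hr]
    ring
  | one => rfl
  | mul a b _ _ ha hb => exact (ha _ _).trans (hb x y)
  | inv a _ ha =>
    rw [← ha]
    exact congrArg₂ _ (a.apply_symm_apply x) (a.apply_symm_apply y)

lemma map_mem_integerLattice_iff_of_mem_weylD6 {w : V6 ≃ₗ[ℚ] V6} (hw : w ∈ WeylD6) (x : V6) :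
    w x ∈ integerLattice (Fin 6) ↔ x ∈ integerLattice (Fin 6) := by
  induction hw using Subgroup.closure_induction generalizing x with
  | mem s hs =>
    obtain ⟨r, hrD, hr, hs⟩ := hs
    have maps {x : V6} (hx : x ∈ integerLattice (Fin 6)) : s x ∈ integerLattice (Fin 6) := by
      have hrL := mem_integerLattice_of_mem_D6 hrD
      obtain ⟨m, hm⟩ := exists_dotProduct_eq_intCast hx hrL
      rw [hs, bil6_eq_dotProduct, hm, Int.cast_smul_eq_zsmul]
      exact sub_mem hx (Submodule.smul_mem _ m hrL)
    have involutive : s (s x) = x := by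
      rw [bil6_eq_dotProduct] at hr
      simp only [hs, bil6_eq_dotProduct, sub_dotProduct, smul_dotProduct, hr, smul_eq_mul]
      module
    exact ⟨fun h => involutive ▸ maps h, maps⟩
  | one => rfl
  | mul a b _ _ ha hb => exact (ha _).trans (hb x)
  | inv a _ ha =>
    rw [← ha]
    exact iff_of_eq (congrArg (· ∈ integerLattice (Fin 6)) (a.apply_symm_apply x))

lemma IsRealization.map_of_mem_weylD6 {κ : Type*} {G : Matrix κ κ ℤ} {v : κ → V6}
    (hv : IsRealization G v) {w : V6 ≃ₗ[ℚ] V6} (hw : w ∈ WeylD6) :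
    IsRealization G fun i => w (v i) :=
  ⟨fun i => (map_mem_integerLattice_iff_of_mem_weylD6 hw _).2 (hv.mem i),
    fun i j => (dotProduct_map_of_mem_weylD6 hw _ _).trans (hv.dotProduct_eq i j)⟩

lemma exists_weylD6_map_of_orthogonal {u t : V6} (hu : u ∈ integerLattice (Fin 6))
    (ht : t ∈ integerLattice (Fin 6)) (huu : u ⬝ᵥ u = 1) (htt : t ⬝ᵥ t = 1) (hut : u ⬝ᵥ t = 0) :
    ∃ w ∈ WeylD6, w u = t ∧ ∀ x, u ⬝ᵥ x = t ⬝ᵥ x → w x = x := by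
  have hroot : (u - t) ⬝ᵥ (u - t) = 2 := by
    simp only [sub_dotProduct, dotProduct_sub, dotProduct_comm t u, huu, htt, hut]
    norm_num
  refine ⟨normTwoReflection _ hroot, normTwoReflection_mem_weylD6 (sub_mem hu ht) hroot, ?_,
    fun x hx => ?_⟩
  · simp [normTwoReflection_apply, sub_dotProduct, dotProduct_comm t u, huu, hut]
  · simp [normTwoReflection_apply, sub_dotProduct, hx]

/-- The auxiliary vector `t` serves the case `u = -e`: the Weyl group contains no reflection in
`e`, but `-e ↦ t ↦ e` is a product of two reflections in roots. -/
lemma exists_weylD6_map_unit {u e t : V6} (hu : u ∈ integerLattice (Fin 6))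
    (he : e ∈ integerLattice (Fin 6)) (ht : t ∈ integerLattice (Fin 6)) (huu : u ⬝ᵥ u = 1)
    (hee : e ⬝ᵥ e = 1) (htt : t ⬝ᵥ t = 1) (hte : t ⬝ᵥ e = 0) :
    ∃ w ∈ WeylD6, w u = e ∧ ∀ x, u ⬝ᵥ x = 0 → e ⬝ᵥ x = 0 → t ⬝ᵥ x = 0 → w x = x := by
  obtain rfl | rfl | hue := eq_or_eq_neg_or_dotProduct_eq_zero hu he huu hee
  · exact ⟨1, one_mem _, rfl, fun _ _ _ _ => rfl⟩
  · obtain ⟨w₁, hw₁, hmap₁, hfix₁⟩ := exists_weylD6_map_of_orthogonal hu ht huu htt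
      (by simp [dotProduct_comm e, hte])
    obtain ⟨w₂, hw₂, hmap₂, hfix₂⟩ := exists_weylD6_map_of_orthogonal ht he htt hee hte
    refine ⟨w₂ * w₁, mul_mem hw₂ hw₁, ?_, fun x hux hex htx => ?_⟩
    · rw [LinearEquiv.mul_apply, hmap₁, hmap₂]
    · rw [LinearEquiv.mul_apply, hfix₁ x (hux.trans htx.symm), hfix₂ x (htx.trans hex.symm)]
  · obtain ⟨w, hw, hmap, hfix⟩ := exists_weylD6_map_of_orthogonal hu he huu hee hue
    exact ⟨w, hw, hmap, fun x hux hex _ => hfix x (hux.trans hex.symm)⟩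

/-- The last vector `e₅` is what makes room for a sign change at an earlier one. -/
lemma exists_weylD6_map_frame {f : Fin 6 → V6} (hf : IsRealization 1 f) {k : ℕ} (hk : k ≤ 5) :
    ∃ w ∈ WeylD6, ∀ i : Fin 6, i < k → w (f i) = stdVec i := by
  induction k with
  | zero => exact ⟨1, one_mem _, fun i hi => absurd hi (Nat.not_lt_zero _)⟩
  | succ k ih =>
    obtain ⟨w, hw, hwf⟩ := ih (by omega)
    let j : Fin 6 := ⟨k, by omega⟩
    have hwf' := hf.map_of_mem_weylD6 hw
    have he := isRealization_stdVec (ι := Fin 6)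
    have hj : Fin.last 5 ≠ j := Fin.ne_of_val_ne (by simp only [j, Fin.val_last]; omega)
    obtain ⟨w', hw', hmap, hfix⟩ := exists_weylD6_map_unit (hwf'.mem j) (he.mem j)
      (he.mem (Fin.last 5)) (hwf'.dotProduct_self j) (he.dotProduct_self j)
      (he.dotProduct_self _) (he.dotProduct_of_ne hj)
    refine ⟨w' * w, mul_mem hw' hw, fun i hi => ?_⟩
    rw [LinearEquiv.mul_apply]
    obtain hik | hik := (Nat.lt_succ_iff.1 hi).lt_or_eq
    · have hji : j ≠ i := Fin.ne_of_val_ne hik.ne'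
      have hlast : Fin.last 5 ≠ i := Fin.ne_of_val_ne (by simp only [Fin.val_last]; omega)
      have hfi := hwf'.dotProduct_of_ne hji
      rw [hwf i hik] at hfi ⊢
      exact hfix _ hfi (he.dotProduct_of_ne hji) (he.dotProduct_of_ne hlast)
    · obtain rfl : i = j := Fin.ext hik
      exact hmap

lemma consecutiveDiff_eq_of_last_eq {e : Fin 6 → V6}
    (hstd : ∀ i : Fin 5, e i.castSucc = stdVec i.castSucc)
    (hlast : e (Fin.last 5) = stdVec (Fin.last 5)) :
    consecutiveDiff e = ![d1, d2, d3, d4, d5] := by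
  obtain rfl : e = stdVec := funext (Fin.forall_fin_succ'.2 ⟨hstd, hlast⟩)
  ext i j
  fin_cases i <;> fin_cases j <;> simp [consecutiveDiff, stdVec, d1, d2, d3, d4, d5]

lemma consecutiveDiff_eq_of_last_eq_neg {e : Fin 6 → V6}
    (hstd : ∀ i : Fin 5, e i.castSucc = stdVec i.castSucc)
    (hlast : e (Fin.last 5) = -stdVec (Fin.last 5)) :
    consecutiveDiff e = ![d1, d2, d3, d4, d6] := by
  ext i j
  induction i using Fin.lastCases with
  | last =>
    rw [consecutiveDiff, hstd, Fin.succ_last, hlast]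
    fin_cases j <;> simp [stdVec, d6]
  | cast i =>
    rw [consecutiveDiff, hstd, Fin.succ_castSucc, hstd]
    fin_cases i <;> fin_cases j <;> simp [stdVec, d1, d2, d3, d4]

lemma exists_weylD6_map_simpleRoots {v : Fin 5 → V6}
    (hv : IsRealization (CartanMatrix.A 5) v) :
    ∃ w ∈ WeylD6, (fun i => w (v i)) = ![d1, d2, d3, d4, d5] ∨
      (fun i => w (v i)) = ![d1, d2, d3, d4, d6] := by
  obtain ⟨f, hf, rfl⟩ := hv.exists_frame (by norm_num)
  obtain ⟨w, hw, hwf⟩ := exists_weylD6_map_frame hf le_rfl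
  have hstd (i : Fin 5) : w (f i.castSucc) = stdVec i.castSucc := hwf _ i.isLt
  have hdiff : (fun i => w (consecutiveDiff f i)) = consecutiveDiff fun i => w (f i) :=
    funext fun _ => map_sub w _ _
  refine ⟨w, hw, ?_⟩
  rw [hdiff]
  exact ((hf.map_of_mem_weylD6 hw).last_eq_or_eq_neg hstd).imp
    (consecutiveDiff_eq_of_last_eq hstd) (consecutiveDiff_eq_of_last_eq_neg hstd)

end WeylGroup

section SimpleRoots

/-- The simple roots `eᵢ - eᵢ₊₁` of the lattice `A₅`. -/
def simpleRootA5 (i : Fin 5) : A5 :=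
  ⟨consecutiveDiff stdVec i, mem_integerLattice.1
    ((isRealization_consecutiveDiff isRealization_stdVec).mem i), by
      simp [consecutiveDiff, stdVec]⟩

lemma span_simpleRootA5 : Submodule.span ℤ (Set.range simpleRootA5) = ⊤ := by
  refine (Submodule.span_range_subtype_eq_top_iff A5 fun i => (simpleRootA5 i).2).2
    (le_antisymm ?_ fun x hx => ?_)
  · rw [Submodule.span_le, Set.range_subset_iff]
    exact fun i => (simpleRootA5 i).2
  · exact mem_span_consecutiveDiff_stdVec (mem_integerLattice.2 hx.1) hx.2

lemma image_range_eq_span {M : Type*} [AddCommGroup M] [Module ℚ M] (φ : A5 →ₗ[ℤ] M)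
    (w : M ≃ₗ[ℚ] M) :
    ⇑w '' LinearMap.range φ =
      (Submodule.span ℤ (Set.range fun i => w (φ (simpleRootA5 i))) : Set M) := by
  let ψ : A5 →ₗ[ℤ] M := (w : M →ₗ[ℚ] M).restrictScalars ℤ ∘ₗ φ
  have hψ : Submodule.span ℤ (Set.range (ψ ∘ simpleRootA5)) = LinearMap.range ψ := by
    rw [Set.range_comp, Submodule.span_image, span_simpleRootA5, LinearMap.range_eq_map]
  calc ⇑w '' LinearMap.range φ = LinearMap.range ψ := by
        rw [LinearMap.range_comp]; rfl
    _ = _ := congrArg _ hψ.symm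

lemma isRealization_map_simpleRootA5 (φ : A5 →ₗ[ℤ] V6)
    (hrange : ∀ a : A5, φ a ∈ integerLattice (Fin 6))
    (hform : ∀ a b : A5, bil6 (φ a) (φ b) = bil6 (a : V6) (b : V6)) :
    IsRealization (CartanMatrix.A 5) fun i => φ (simpleRootA5 i) :=
  ⟨fun _ => hrange _, fun _ _ => (hform _ _).trans
    ((isRealization_consecutiveDiff isRealization_stdVec).dotProduct_eq _ _)⟩

lemma i1A5_eq_span_range : i1A5 = Submodule.span ℤ (Set.range ![d1, d2, d3, d4, d5]) := by
  simp only [i1A5, range_cons, range_empty, Set.union_empty, Set.singleton_union]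

lemma i2A5_eq_span_range : i2A5 = Submodule.span ℤ (Set.range ![d1, d2, d3, d4, d6]) := by
  simp only [i2A5, range_cons, range_empty, Set.union_empty, Set.singleton_union]

end SimpleRoots

theorem two_primitive_embeddings_of_A5_in_D6_general (φ : A5 →ₗ[ℤ] V6)
    (hrange : ∀ a : A5, φ a ∈ integerLattice (Fin 6))
    (hform : ∀ a b : A5, bil6 (φ a) (φ b) = bil6 (a : V6) (b : V6)) :
    ∃ w ∈ WeylD6,
      ⇑w '' (LinearMap.range φ : Set V6) = (i1A5 : Set V6) ∨
      ⇑w '' (LinearMap.range φ : Set V6) = (i2A5 : Set V6) := by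
  obtain ⟨w, hw, hmap⟩ :=
    exists_weylD6_map_simpleRoots (isRealization_map_simpleRootA5 φ hrange hform)
  refine ⟨w, hw, hmap.imp (fun h => ?_) fun h => ?_⟩
  · rw [image_range_eq_span, h, i1A5_eq_span_range]
  · rw [image_range_eq_span, h, i2A5_eq_span_range]

/-- Every primitive embedding of the root lattice `A₅` into `D₆`
is equivalent, under the Weyl group `W(D₆)`, to `i₁(A₅)` or `i₂(A₅)`. -/
theorem two_primitive_embeddings_of_A5_in_D6
    (φ : A5 →ₗ[ℤ] V6)
    (hinj : Function.Injective φ)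
    (hrange : ∀ a : A5, φ a ∈ D6)
    (hform : ∀ a b : A5, bil6 (φ a) (φ b) = bil6 (a : V6) (b : V6))
    (hprim : ∀ v ∈ D6, ∀ n : ℤ, n ≠ 0 → n • v ∈ LinearMap.range φ →
      v ∈ LinearMap.range φ) :
    ∃ w ∈ WeylD6,
      ⇑w '' (LinearMap.range φ : Set V6) = (i1A5 : Set V6) ∨
      ⇑w '' (LinearMap.range φ : Set V6) = (i2A5 : Set V6) :=
  two_primitive_embeddings_of_A5_in_D6_general φ
    (fun a => mem_integerLattice_of_mem_D6 (hrange a)) hform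
end
end

section
/- The two primitive embeddings i₁ and i₂ of A₅ into D₆ are not equivalent under the Weyl group: there is no element w ∈ W(D₆) such that w(i₁(A₅)) = i₂(A₅). -/
noncomputable section

/-!
A reflection in a norm-`2` vector of an integral lattice `L` moves a vector of the dual lattice by
an element of `L`, so the reflection group acts trivially on the discriminant group of `L`.
For `L = D₆`, the half-spin weight `s = ½(1, 1, 1, 1, 1, 1)` is orthogonal to `i₁(A₅)`. If
`w(i₁(A₅)) = i₂(A₅)`, then `w s` lies in `s + D₆` and is orthogonal to `i₂(A₅)`, hence is a multiple
of `(1, 1, 1, 1, 1, -1)`; by parity of the coordinate sum, `s + D₆` contains no such multiple.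
-/

open LinearMap (BilinForm)

section RootReflectionGroup

variable {R M : Type*} [CommRing R] [AddCommGroup M] [Module R M] {B : BilinForm R M} {Φ : Set M}

/-- The group generated by the reflections `x ↦ x - B x r • r` in the vectors `r` of `Φ` with
`B r r = 2`. It is the Weyl group when `Φ` is the lattice spanned by a simply laced root system
with roots of norm `2`. -/
def rootReflectionGroup (B : BilinForm R M) (Φ : Set M) : Subgroup (M ≃ₗ[R] M) :=
  Subgroup.closure {s | ∃ r ∈ Φ, ∃ h : B.flip r r = 2, s = Module.reflection h}

@[elab_as_elim]
theorem rootReflectionGroup_induction {p : (M ≃ₗ[R] M) → Prop} (one : p 1)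
    (reflection_mul : ∀ r ∈ Φ, ∀ (h : B.flip r r = 2) (w : M ≃ₗ[R] M), p w →
      p (Module.reflection h * w))
    {w : M ≃ₗ[R] M} (hw : w ∈ rootReflectionGroup B Φ) : p w := by
  induction hw using Subgroup.closure_induction_left with
  | one => exact one
  | mul_left s hs w _ ih =>
    obtain ⟨r, hr, h, rfl⟩ := hs
    exact reflection_mul r hr h w ih
  | inv_mul_cancel s hs w _ ih =>
    obtain ⟨r, hr, h, rfl⟩ := hs
    rw [Module.reflection_inv]
    exact reflection_mul r hr h w ih

theorem isOrthogonal_reflection_flip (hB : B.IsSymm) {r : M} (h : B.flip r r = 2) :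
    B.IsOrthogonal (Module.reflection h) := by
  intro x y
  have hrr : B r r = 2 := h
  have hry : B r y = B y r := hB.eq r y
  simp only [Module.reflection_apply, BilinForm.flip_apply, map_sub, map_smul, LinearMap.sub_apply,
    LinearMap.smul_apply, smul_eq_mul, hrr, hry]
  ring

theorem isOrthogonal_of_mem_rootReflectionGroup (hB : B.IsSymm) {w : M ≃ₗ[R] M}
    (hw : w ∈ rootReflectionGroup B Φ) : B.IsOrthogonal w := by
  refine rootReflectionGroup_induction (fun _ _ => rfl) (fun r _ h w ih x y => ?_) hw
  exact (isOrthogonal_reflection_flip hB h (w x) (w y)).trans (ih x y)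

end RootReflectionGroup

section DualLattice

variable {R K M : Type*} [CommRing R] [Field K] [Algebra R K] [AddCommGroup M] [Module R M]
  [Module K M] [IsScalarTower R K M] {B : BilinForm K M} {L : Submodule R M}

theorem reflection_sub_self_mem_of_mem_dualSubmodule {r v : M} (hr : r ∈ L)
    (h : B.flip r r = 2) (hv : v ∈ B.dualSubmodule L) : Module.reflection h v - v ∈ L := by
  obtain ⟨k, hk⟩ := Submodule.mem_one.mp (hv r hr)
  have hsub : Module.reflection h v - v = -(k • r) := by
    rw [Module.reflection_apply, BilinForm.flip_apply, ← hk, algebraMap_smul, sub_sub_cancel_left]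
  exact hsub ▸ L.neg_mem (L.smul_mem k hr)

theorem apply_sub_self_mem_of_mem_rootReflectionGroup (hL : L ≤ B.dualSubmodule L)
    {w : M ≃ₗ[K] M} (hw : w ∈ rootReflectionGroup B L) {v : M} (hv : v ∈ B.dualSubmodule L) :
    w v - v ∈ L := by
  refine rootReflectionGroup_induction (by simp) (fun r hr h w ih => ?_) hw
  have hwv : w v ∈ B.dualSubmodule L := (Submodule.sub_mem_iff_left _ hv).mp (hL ih)
  rw [LinearEquiv.mul_apply, ← sub_add_sub_cancel _ (w v)]
  exact L.add_mem (reflection_sub_self_mem_of_mem_dualSubmodule hr h hwv) ih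

end DualLattice

/-- The form `bil6` as a bundled bilinear form. -/
def bilForm6 : BilinForm ℚ V6 := dotProductBilin ℚ ℚ

theorem bilForm6_apply (x y : V6) : bilForm6 x y = ∑ i, x i * y i := rfl

theorem bilForm6_isSymm : bilForm6.IsSymm := ⟨dotProduct_comm⟩

theorem WeylD6_eq_rootReflectionGroup : WeylD6 = rootReflectionGroup bilForm6 D6 := by
  refine congrArg Subgroup.closure (Set.ext fun s => exists_congr fun r =>
    and_congr_right fun _ => ?_)
  constructor
  · rintro ⟨h, hs⟩
    refine ⟨h, LinearEquiv.ext fun x => ?_⟩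
    exact (hs x).trans (Module.reflection_apply (f := bilForm6.flip r) x h).symm
  · rintro ⟨h, rfl⟩
    exact ⟨h, fun x => Module.reflection_apply x h⟩

theorem D6_le_dualSubmodule_D6 : D6 ≤ bilForm6.dualSubmodule D6 := by
  intro x hx y hy
  choose a ha using hx.1
  choose b hb using hy.1
  exact Submodule.mem_one.mpr ⟨∑ i, a i * b i, by simp [bilForm6_apply, ha, hb]⟩

/-- The half-spin weight `½(1, 1, 1, 1, 1, 1)` of `D₆`, which spans the orthogonal complement of
`i₁(A₅)`. -/
def spinWeight : V6 := fun _ => 1 / 2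

theorem bilForm6_spinWeight (x : V6) : bilForm6 spinWeight x = (∑ i, x i) / 2 := by
  simp only [bilForm6_apply, spinWeight, ← Finset.mul_sum]
  ring

theorem spinWeight_mem_dualSubmodule_D6 : spinWeight ∈ bilForm6.dualSubmodule D6 := by
  rintro x ⟨-, k, hk⟩
  exact Submodule.mem_one.mpr ⟨k, by simp [bilForm6_spinWeight, hk]⟩

theorem bilForm6_spinWeight_eq_zero_of_mem_i1A5 {x : V6} (hx : x ∈ i1A5) :
    bilForm6 spinWeight x = 0 := by
  induction hx using Submodule.span_induction with
  | mem x hx =>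
    rcases hx with rfl | rfl | rfl | rfl | rfl <;>
      simp [bilForm6_spinWeight, Fin.sum_univ_six, d1, d2, d3, d4, d5]
  | zero => exact map_zero _
  | add x y _ _ hx hy => rw [map_add, hx, hy, add_zero]
  | smul a x _ hx => rw [map_zsmul, hx, smul_zero]

theorem eq_smul_of_orthogonal_i2A5 {v : V6} (hv : ∀ y ∈ i2A5, bilForm6 v y = 0) :
    v = v 0 • ![1, 1, 1, 1, 1, -1] := by
  have hroot : ∀ y ∈ ({d1, d2, d3, d4, d6} : Set V6), ∑ i, v i * y i = 0 :=
    fun y hy => hv y (Submodule.subset_span hy)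
  have h1 : v 0 - v 1 = 0 := by
    simpa [Fin.sum_univ_six, d1, sub_eq_add_neg] using hroot d1 (by simp)
  have h2 : v 1 - v 2 = 0 := by
    simpa [Fin.sum_univ_six, d2, sub_eq_add_neg] using hroot d2 (by simp)
  have h3 : v 2 - v 3 = 0 := by
    simpa [Fin.sum_univ_six, d3, sub_eq_add_neg] using hroot d3 (by simp)
  have h4 : v 3 - v 4 = 0 := by
    simpa [Fin.sum_univ_six, d4, sub_eq_add_neg] using hroot d4 (by simp)
  have h6 : v 4 + v 5 = 0 := by
    simpa [Fin.sum_univ_six, d6] using hroot d6 (by simp)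
  ext i
  fin_cases i <;> simp <;> linarith

theorem smul_sub_spinWeight_notMem_D6 (c : ℚ) :
    c • ![1, 1, 1, 1, 1, -1] - spinWeight ∉ D6 := by
  rintro ⟨hint, k, hk⟩
  obtain ⟨m, hm⟩ := hint 0
  have hcoord : c - 1 / 2 = m := by simpa [spinWeight] using hm
  have hsum : ∑ i, (c • ![1, 1, 1, 1, 1, -1] - spinWeight : V6) i = 4 * c - 3 := by
    simp [Fin.sum_univ_six, spinWeight]
    ring
  have hparity : 4 * m - 1 = 2 * k := by
    exact_mod_cast (by linarith : (4 * m - 1 : ℚ) = 2 * k)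
  omega

/-- The two primitive embeddings `i₁(A₅)` and `i₂(A₅)` in `D₆` are not
equivalent under the Weyl group `W(D₆)`. -/
theorem i1_not_Weyl_equivalent_to_i2 :
    ¬ ∃ w ∈ WeylD6, ⇑w '' (i1A5 : Set V6) = (i2A5 : Set V6) := by
  rintro ⟨w, hw, himage⟩
  rw [WeylD6_eq_rootReflectionGroup] at hw
  have hcoset : w spinWeight - spinWeight ∈ D6 :=
    apply_sub_self_mem_of_mem_rootReflectionGroup D6_le_dualSubmodule_D6 hw
      spinWeight_mem_dualSubmodule_D6
  have horth : ∀ y ∈ i2A5, bilForm6 (w spinWeight) y = 0 := by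
    intro y hy
    obtain ⟨x, hx, rfl⟩ : y ∈ w '' i1A5 := himage ▸ hy
    exact (isOrthogonal_of_mem_rootReflectionGroup bilForm6_isSymm hw spinWeight x).trans
      (bilForm6_spinWeight_eq_zero_of_mem_i1A5 hx)
  rw [eq_smul_of_orthogonal_i2A5 horth] at hcoset
  exact smul_sub_spinWeight_notMem_D6 _ hcoset
end
end

section
/- For every transposition τ of the four ℚ⁶-factors of ℚ²⁴ = (ℚ⁶)⁴, the linear isometry τ∘G of ℚ²⁴, where G = g⊕g⊕g⊕g acts by g on each factor, maps the Niemeier lattice N(D₆⁴) onto itself; in particular τ∘G is an automorphism of N(D₆⁴). -/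
noncomputable section

/-- The nontrivial Dynkin diagram automorphism `g` of `D₆`:
`g(e₆) = -e₆` and `g(eᵢ) = eᵢ` for `i ≤ 5` (it interchanges `d₅` and `d₆`). -/
def gmap (x : V6) : V6 := fun i => if i = 5 then -x 5 else x i

/-- The glue vector `δ₆ = ½(d₁+2d₂+3d₃+4d₄+2d₅+3d₆)`, representing the class `[1]`. -/
def delta6 : V6 :=
  (1/2 : ℚ) • (d1 + (2 : ℚ) • d2 + (3 : ℚ) • d3 + (4 : ℚ) • d4 + (2 : ℚ) • d5 + (3 : ℚ) • d6)

/-- The glue vector `δ̄₆ = d₁+d₂+d₃+d₄+½(d₅+d₆)`, representing the class `[2]`. -/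
def deltaBar6 : V6 := d1 + d2 + d3 + d4 + (1/2 : ℚ) • (d5 + d6)

/-- The glue vector `δ̃₆ = ½(d₁+2d₂+3d₃+4d₄+3d₅+2d₆)`, representing the class `[3]`. -/
def deltaTilde6 : V6 :=
  (1/2 : ℚ) • (d1 + (2 : ℚ) • d2 + (3 : ℚ) • d3 + (4 : ℚ) • d4 + (3 : ℚ) • d5 + (2 : ℚ) • d6)

abbrev V24 : Type := Fin 4 → V6

/-- The standard bilinear form on `ℚ²⁴ = (ℚ⁶)⁴`. -/
def bil24 (x y : V24) : ℚ := ∑ k, bil6 (x k) (y k)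

/-- The glue components `γ₀ = 0`, `γ₁ = δ₆`, `γ₂ = δ̄₆`, `γ₃ = δ̃₆`. -/
def gam : Fin 4 → V6 := ![0, delta6, deltaBar6, deltaTilde6]

/-- The sixteen codewords of the glue code of `N(D₆⁴)`. -/
def codes : Set (Fin 4 → Fin 4) :=
  {![0,0,0,0], ![0,1,2,3], ![0,3,1,2], ![0,2,3,1],
   ![1,1,1,1], ![1,0,3,2], ![1,3,2,0], ![1,2,0,3],
   ![2,2,2,2], ![2,0,1,3], ![2,3,0,1], ![2,1,3,0],
   ![3,3,3,3], ![3,0,2,1], ![3,1,0,2], ![3,2,1,0]}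

/-- The Niemeier lattice `N(D₆⁴)`: the `ℤ`-submodule of `ℚ²⁴` generated by
`D₆ ⊕ D₆ ⊕ D₆ ⊕ D₆` together with the sixteen glue vectors. -/
def NL : Submodule ℤ V24 :=
  Submodule.span ℤ ({x : V24 | ∀ k, x k ∈ D6} ∪ ((fun c : Fin 4 → Fin 4 => fun k => gam (c k)) '' codes))

/-!
The glue code consists of the four constant words together with the twelve even permutations of
`0123`. Since `g` interchanges `d₅` and `d₆`, it exchanges the glue vectors `γ₁` and `γ₃` and fixes
`γ₀` and `γ₂`. Thus `τ ∘ G` acts on codewords by `c ↦ (1 3) ∘ c ∘ τ⁻¹`, which preserves constant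
words, and preserves even permutations as soon as `τ` is odd. As `g` preserves `D₆`, every odd
permutation `τ` gives a map `τ ∘ G` preserving the lattice, with inverse `τ⁻¹ ∘ G` of the same kind.
-/

open Equiv.Perm (sign)

theorem gmap_involutive : Function.Involutive gmap := fun x => by
  ext i
  by_cases h : i = 5 <;> simp [gmap, h]

theorem gmap_eq_self {x : V6} (hx : x 5 = 0) : gmap x = x := by
  ext i
  by_cases h : i = 5 <;> simp [gmap, h, hx]

theorem sum_gmap (x : V6) : ∑ i, gmap x i = ∑ i, x i - 2 * x 5 := by
  simp only [Fin.sum_univ_six, gmap, Fin.reduceEq, if_true, if_false]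
  ring

theorem gmap_mem_D6 {x : V6} (hx : x ∈ D6) : gmap x ∈ D6 := by
  obtain ⟨hint, k, hk⟩ := hx
  obtain ⟨m, hm⟩ := hint 5
  refine ⟨fun i => ?_, k - m, ?_⟩
  · by_cases h : i = 5
    · exact ⟨-m, by simp [gmap, h, hm]⟩
    · simpa [gmap, h] using hint i
  · rw [sum_gmap, hk, hm]
    push_cast
    ring

/-- The diagram automorphism `g` of `D₆` as a linear endomorphism of `ℚ⁶`. -/
def gLinear : V6 →ₗ[ℚ] V6 where
  toFun := gmap
  map_add' x y := by
    ext i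
    by_cases h : i = 5 <;> simp [gmap, h, add_comm]
  map_smul' c x := by
    ext i
    by_cases h : i = 5 <;> simp [gmap, h]

theorem gmap_d5 : gmap d5 = d6 := by
  ext i
  fin_cases i <;> simp [gmap, d5, d6]

theorem gmap_d6 : gmap d6 = d5 := by
  rw [← gmap_d5, gmap_involutive]

theorem gmap_combination_simpleRoots (a₁ a₂ a₃ a₄ a₅ a₆ : ℚ) :
    gmap (a₁ • d1 + a₂ • d2 + a₃ • d3 + a₄ • d4 + a₅ • d5 + a₆ • d6) =
      a₁ • d1 + a₂ • d2 + a₃ • d3 + a₄ • d4 + a₆ • d5 + a₅ • d6 := by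
  have h₁ : gLinear d1 = d1 := gmap_eq_self rfl
  have h₂ : gLinear d2 = d2 := gmap_eq_self rfl
  have h₃ : gLinear d3 = d3 := gmap_eq_self rfl
  have h₄ : gLinear d4 = d4 := gmap_eq_self rfl
  have h₅ : gLinear d5 = d6 := gmap_d5
  have h₆ : gLinear d6 = d5 := gmap_d6
  change gLinear _ = _
  simp only [map_add, map_smul, h₁, h₂, h₃, h₄, h₅, h₆]
  abel

theorem gmap_delta6 : gmap delta6 = deltaTilde6 := by
  convert gmap_combination_simpleRoots (1/2) 1 (3/2) 2 1 (3/2) using 1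
  · congr 1
    unfold delta6
    module
  · unfold deltaTilde6
    module

theorem gmap_deltaTilde6 : gmap deltaTilde6 = delta6 := by
  rw [← gmap_delta6, gmap_involutive]

theorem gmap_deltaBar6 : gmap deltaBar6 = deltaBar6 := by
  convert gmap_combination_simpleRoots 1 1 1 1 (1/2) (1/2) using 1
  · congr 1
    unfold deltaBar6
    module
  · unfold deltaBar6
    module

theorem gmap_gam (a : Fin 4) : gmap (gam a) = gam (Equiv.swap 1 3 a) := by
  fin_cases a
  · exact map_zero gLinear
  · exact gmap_delta6
  · exact gmap_deltaBar6
  · exact gmap_deltaTilde6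

theorem mem_codes_iff {c : Fin 4 → Fin 4} :
    c ∈ codes ↔ (∃ a, c = Function.const _ a) ∨ ∃ σ : Equiv.Perm (Fin 4), sign σ = 1 ∧ c = σ := by
  simp only [codes, Set.mem_insert_iff, Set.mem_singleton_iff]
  constructor
  · rintro (rfl | rfl | rfl | rfl | rfl | rfl | rfl | rfl |
      rfl | rfl | rfl | rfl | rfl | rfl | rfl | rfl) <;> decide
  · rintro (⟨a, rfl⟩ | ⟨σ, hσ, rfl⟩)
    · revert a
      decide
    · revert σ
      decide

theorem comp_mem_codes {ρ τ : Equiv.Perm (Fin 4)} (h : sign ρ = sign τ) {c : Fin 4 → Fin 4}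
    (hc : c ∈ codes) : ρ ∘ c ∘ τ ∈ codes := by
  rw [mem_codes_iff] at hc ⊢
  rcases hc with ⟨a, rfl⟩ | ⟨σ, hσ, rfl⟩
  · exact Or.inl ⟨ρ a, rfl⟩
  · refine Or.inr ⟨ρ * σ * τ, ?_, rfl⟩
    rw [map_mul, map_mul, hσ, mul_one, h, Int.units_mul_self]

/-- The map `τ ∘ G` on `ℚ²⁴`, where `G = g ⊕ g ⊕ g ⊕ g` and `τ` permutes the four factors
`ℚ⁶`, moving the `k`-th one to position `τ k`. -/
def permCompG (τ : Equiv.Perm (Fin 4)) : V24 →ₗ[ℚ] V24 :=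
  LinearMap.pi fun k => gLinear ∘ₗ LinearMap.proj (τ⁻¹ k)

theorem permCompG_apply (τ : Equiv.Perm (Fin 4)) (x : V24) (k : Fin 4) :
    permCompG τ x k = gmap (x (τ⁻¹ k)) :=
  rfl

theorem permCompG_inv_leftInverse (τ : Equiv.Perm (Fin 4)) :
    Function.LeftInverse (permCompG τ⁻¹) (permCompG τ) := fun x => by
  funext k
  rw [permCompG_apply, permCompG_apply, gmap_involutive, Equiv.Perm.inv_def τ⁻¹,
    Equiv.apply_symm_apply]

theorem permCompG_gam (τ : Equiv.Perm (Fin 4)) (c : Fin 4 → Fin 4) :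
    permCompG τ (fun k => gam (c k)) = fun k => gam ((Equiv.swap 1 3 ∘ c ∘ ⇑τ⁻¹) k) := by
  funext k
  exact gmap_gam _

theorem mapsTo_permCompG_NL {τ : Equiv.Perm (Fin 4)} (hτ : sign τ = -1) :
    Set.MapsTo (permCompG τ) NL NL := by
  suffices h : NL ≤ NL.comap ((permCompG τ).restrictScalars ℤ) from h
  refine Submodule.span_le.mpr ?_
  rintro _ (hx | ⟨c, hc, rfl⟩)
  · exact Submodule.subset_span (Or.inl fun k => gmap_mem_D6 (hx (τ⁻¹ k)))
  · have hsign : sign (Equiv.swap (1 : Fin 4) 3) = sign τ⁻¹ := by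
      rw [Equiv.Perm.sign_inv, hτ, Equiv.Perm.sign_swap (by decide)]
    exact Submodule.subset_span (Or.inr ⟨_, comp_mem_codes hsign hc, (permCompG_gam τ c).symm⟩)

theorem transposition_comp_g_preserves_NiemeierD6pow4_general
    (τ : Equiv.Perm (Fin 4)) (hτ : sign τ = -1) :
    (fun (x : V24) (k : Fin 4) => gmap (x (τ⁻¹ k))) '' (NL : Set V24) = (NL : Set V24) := by
  have hinv : sign τ⁻¹ = -1 := by rw [Equiv.Perm.sign_inv, hτ]
  have hleft : Function.LeftInverse (permCompG τ⁻¹) (permCompG τ) := permCompG_inv_leftInverse τ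
  have hright : Function.LeftInverse (permCompG τ) (permCompG τ⁻¹) := by
    simpa only [inv_inv] using permCompG_inv_leftInverse τ⁻¹
  have hbij : Set.BijOn (permCompG τ) NL NL :=
    Set.InvOn.bijOn ⟨hleft.leftInvOn _, hright.leftInvOn _⟩
      (mapsTo_permCompG_NL hτ) (mapsTo_permCompG_NL hinv)
  exact hbij.image_eq

/-- For every transposition `τ` of the four `ℚ⁶`-factors of `ℚ²⁴`, the map
`τ ∘ G`, where `G = g ⊕ g ⊕ g ⊕ g`, maps the Niemeier lattice `N(D₆⁴)` onto itself. -/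
theorem transposition_comp_g_preserves_NiemeierD6pow4
    (τ : Equiv.Perm (Fin 4)) (hτ : τ.IsSwap) :
    (fun (x : V24) (k : Fin 4) => gmap (x (τ⁻¹ k))) '' (NL : Set V24) = (NL : Set V24) :=
  transposition_comp_g_preserves_NiemeierD6pow4_general τ hτ.sign_eq
end
end

section
/- The map Γ = γ₀ ⊕ γ₀ ⊕ id on ℚ¹⁰ ⊕ ℚ¹⁰ ⊕ ℚ⁶, acting by the A₉ diagram automorphism γ₀ on each A₉-factor and trivially on the D₆-factor, maps the Niemeier lattice N(A₉²D₆) onto itself; in particular Γ is an automorphism of N(A₉²D₆) of order 2 lying in G₁(L_root). -/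
noncomputable section

abbrev V10 : Type := Fin 10 → ℚ

/-- The standard bilinear form on `ℚ¹⁰`. -/
def bil10 (x y : V10) : ℚ := ∑ i, x i * y i

/-- The simple roots `aᵢ = eᵢ - eᵢ₊₁` of `A₉` (here `a i` is `a_{i+1}` for `i : Fin 9`). -/
def a (i : Fin 9) : V10 :=
  fun j => if (j : ℕ) = (i : ℕ) then 1 else if (j : ℕ) = (i : ℕ) + 1 then -1 else 0

/-- The `A₉` root lattice: integer vectors in `ℚ¹⁰` with coordinate sum zero. -/
def A9 : Submodule ℤ V10 where
  carrier := {x | (∀ i, ∃ m : ℤ, x i = (m : ℚ)) ∧ (∑ i, x i) = 0}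
  add_mem' := by
    rintro x y ⟨hx1, hx2⟩ ⟨hy1, hy2⟩
    refine ⟨fun i => ?_, ?_⟩
    · obtain ⟨m, hm⟩ := hx1 i
      obtain ⟨m', hm'⟩ := hy1 i
      exact ⟨m + m', by push_cast [Pi.add_apply, hm, hm']; ring⟩
    · have : (∑ i, (x + y) i) = (∑ i, x i) + ∑ i, y i := by
        simp [Pi.add_apply, Finset.sum_add_distrib]
      rw [this, hx2, hy2]; ring
  zero_mem' := ⟨fun i => ⟨0, by simp⟩, by simp⟩
  smul_mem' := by
    rintro c x ⟨hx1, hx2⟩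
    refine ⟨fun i => ?_, ?_⟩
    · obtain ⟨m, hm⟩ := hx1 i
      refine ⟨c * m, ?_⟩
      have : (c • x) i = (c : ℚ) * x i := by simp [Pi.smul_apply, zsmul_eq_mul]
      rw [this, hm]; push_cast; ring
    · have : (∑ i, (c • x) i) = (c : ℚ) * ∑ i, x i := by
        simp [Pi.smul_apply, zsmul_eq_mul, Finset.mul_sum]
      rw [this, hx2]; ring

/-- The glue generator `α = (1/10)(9a₁+8a₂+7a₃+6a₄+5a₅+4a₆+3a₇+2a₈+a₉)` of `A₉*/A₉`. -/
def alphaA9 : V10 := (1/10 : ℚ) • ∑ i : Fin 9, ((9 : ℚ) - (i : ℕ)) • a i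

/-- The nontrivial diagram automorphism `γ₀` of `A₉`: `eᵢ ↦ -e₁₁₋ᵢ` (so `aᵢ ↦ a₁₀₋ᵢ`). -/
def gamma0 (x : V10) : V10 := fun j => -(x j.rev)

abbrev V26 : Type := V10 × V10 × V6

/-- The standard bilinear form on `ℚ²⁶ = ℚ¹⁰ ⊕ ℚ¹⁰ ⊕ ℚ⁶`. -/
def bil26 (x y : V26) : ℚ := bil10 x.1 y.1 + bil10 x.2.1 y.2.1 + bil6 x.2.2 y.2.2

/-- The Niemeier lattice `N(A₉²D₆)`: the `ℤ`-submodule of `ℚ²⁶` generated by `A₉ ⊕ A₉ ⊕ D₆`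
together with the glue vectors `(2α,4α,0)`, `(5α,0,δ₆)` and `(0,5α,δ̃₆)`. -/
def NL2 : Submodule ℤ V26 :=
  Submodule.span ℤ ({p : V26 | p.1 ∈ A9 ∧ p.2.1 ∈ A9 ∧ p.2.2 ∈ D6} ∪
    {((2 : ℚ) • alphaA9, (4 : ℚ) • alphaA9, 0),
     ((5 : ℚ) • alphaA9, 0, delta6),
     (0, (5 : ℚ) • alphaA9, deltaTilde6)})

/-!
`Γ` is a linear involution, so it suffices that it maps `N(A₉²D₆)` into itself. It preserves the
root lattice `A₉ ⊕ A₉ ⊕ D₆`, and `γ₀` acts as `-1` on the glue group `A₉*/A₉`. Hence, modulo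
roots, `Γ` negates `(2α, 4α, 0)` and fixes `(5α, 0, δ₆)` and `(0, 5α, δ̃₆)`, the class of `5α`
being its own negative because `10α ∈ A₉`.
-/

theorem image_eq_of_involutive_of_mapsTo {X : Type*} {f : X → X} {s : Set X}
    (hf : Function.Involutive f) (hs : Set.MapsTo f s s) : f '' s = s :=
  hs.image_subset.antisymm fun x hx => ⟨f x, hs hx, hf x⟩

theorem span_union_mem_invtSubmodule {R M : Type*} [Ring R] [AddCommGroup M] [Module R M]
    {f : Module.End R M} {L : Submodule R M} {S : Set M} (hL : L ∈ f.invtSubmodule)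
    (hS : ∀ s ∈ S, ∃ c : R, f s - c • s ∈ L) :
    Submodule.span R (L ∪ S) ∈ f.invtSubmodule := by
  refine Submodule.span_le.mpr ?_
  rintro x (hx | hx)
  · exact Submodule.subset_span (Or.inl (hL hx))
  · obtain ⟨c, hc⟩ := hS x hx
    have hroot : f x - c • x ∈ Submodule.span R (L ∪ S) := Submodule.subset_span (Or.inl hc)
    have hglue : c • x ∈ Submodule.span R (L ∪ S) :=
      Submodule.smul_mem _ c (Submodule.subset_span (Or.inr hx))
    simpa only [SetLike.mem_coe, Submodule.mem_comap, sub_add_cancel] using add_mem hroot hglue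

/-- The vectors of `ℚ¹⁰` pairing integrally with `A₉`. This is the dual lattice `A₉*` plus the line
orthogonal to `A₉`, as the dual is taken in `ℚ¹⁰` instead of in the span of `A₉`; `γ₀` acts as `-1`
modulo `A₉` on all of it. -/
def dualA9 : Submodule ℤ V10 :=
  LinearMap.BilinForm.dualSubmodule (dotProductBilin ℚ ℚ) A9

theorem mem_dualA9_iff {x : V10} : x ∈ dualA9 ↔ ∀ y ∈ A9, ∃ m : ℤ, (m : ℚ) = x ⬝ᵥ y := by
  simp only [dualA9, LinearMap.BilinForm.mem_dualSubmodule, Submodule.mem_one]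
  rfl

theorem single_sub_single_mem_A9 (i j : Fin 10) :
    (Pi.single i 1 - Pi.single j 1 : V10) ∈ A9 := by
  refine ⟨fun k => ⟨(Pi.single i 1 - Pi.single j 1 : Fin 10 → ℤ) k, ?_⟩, ?_⟩
  · simp only [Pi.sub_apply, Pi.single_apply]
    push_cast
    rfl
  · simp only [Pi.sub_apply, Finset.sum_sub_distrib, Finset.sum_pi_single', Finset.mem_univ,
      if_true, sub_self]

theorem exists_int_eq_sub_of_mem_dualA9 {x : V10} (hx : x ∈ dualA9) (i j : Fin 10) :
    ∃ m : ℤ, x i - x j = m := by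
  obtain ⟨m, hm⟩ := mem_dualA9_iff.mp hx _ (single_sub_single_mem_A9 i j)
  exact ⟨m, by rw [hm, dotProduct_sub, dotProduct_single_one, dotProduct_single_one]⟩

theorem alphaA9_eq : alphaA9 = Pi.single 0 1 - fun _ => 1 / 10 := by
  ext j
  fin_cases j <;> norm_num [alphaA9, a, Fin.sum_univ_succ, Pi.single_apply]

theorem alphaA9_mem_dualA9 : alphaA9 ∈ dualA9 := by
  refine mem_dualA9_iff.mpr fun y ⟨hint, hsum⟩ => ?_
  obtain ⟨m, hm⟩ := hint 0
  have hconst : (fun _ => 1 / 10 : V10) ⬝ᵥ y = 0 := by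
    simp only [dotProduct, ← Finset.mul_sum, hsum, mul_zero]
  exact ⟨m, by rw [alphaA9_eq, sub_dotProduct, single_one_dotProduct, hconst, sub_zero, hm]⟩

theorem ofNat_smul_alphaA9_mem_dualA9 (n : ℕ) [n.AtLeastTwo] :
    (ofNat(n) : ℚ) • alphaA9 ∈ dualA9 := by
  rw [ofNat_smul_eq_nsmul]
  exact nsmul_mem alphaA9_mem_dualA9 _

theorem ten_smul_alphaA9_mem_A9 : (10 : ℚ) • alphaA9 ∈ A9 := by
  have hsum : (10 : ℚ) • alphaA9 = ∑ j : Fin 10, (Pi.single 0 1 - Pi.single j 1 : V10) := by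
    ext k
    by_cases hk : k = 0 <;> norm_num [alphaA9_eq, Finset.sum_apply, Pi.single_apply, hk]
  rw [hsum]
  exact sum_mem fun j _ => single_sub_single_mem_A9 0 j

theorem gamma0_involutive : Function.Involutive gamma0 := fun x => by
  ext j
  simp only [gamma0, Fin.rev_rev, neg_neg]

theorem sum_gamma0 (x : V10) : ∑ i, gamma0 x i = -∑ i, x i := by
  simp only [gamma0, Finset.sum_neg_distrib]
  exact congrArg Neg.neg (Equiv.sum_comp Fin.revPerm x)

theorem gamma0_mem_A9 {x : V10} (hx : x ∈ A9) : gamma0 x ∈ A9 := by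
  obtain ⟨hint, hsum⟩ := hx
  refine ⟨fun i => ?_, by rw [sum_gamma0, hsum, neg_zero]⟩
  obtain ⟨m, hm⟩ := hint i.rev
  exact ⟨-m, by rw [gamma0, hm, Int.cast_neg]⟩

theorem gamma0_add_self_mem_A9 {x : V10} (hx : x ∈ dualA9) : gamma0 x + x ∈ A9 := by
  refine ⟨fun i => ?_, ?_⟩
  · obtain ⟨m, hm⟩ := exists_int_eq_sub_of_mem_dualA9 hx i i.rev
    exact ⟨m, by rw [Pi.add_apply, gamma0, neg_add_eq_sub, hm]⟩
  · simp only [Pi.add_apply, Finset.sum_add_distrib, sum_gamma0, neg_add_cancel]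

theorem gamma0_sub_self_mem_A9 {x : V10} (hx : x ∈ dualA9) (h2x : x + x ∈ A9) :
    gamma0 x - x ∈ A9 := by
  simpa only [add_sub_add_right_eq_sub] using sub_mem (gamma0_add_self_mem_A9 hx) h2x

theorem gamma0_five_smul_alphaA9_sub_mem_A9 :
    gamma0 ((5 : ℚ) • alphaA9) - (5 : ℚ) • alphaA9 ∈ A9 := by
  have hten : (5 : ℚ) • alphaA9 + (5 : ℚ) • alphaA9 = (10 : ℚ) • alphaA9 := by module
  exact gamma0_sub_self_mem_A9 (ofNat_smul_alphaA9_mem_dualA9 5) (hten ▸ ten_smul_alphaA9_mem_A9)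

/-- `γ₀` as a `ℤ`-linear endomorphism of `ℚ¹⁰`. -/
def gamma0Hom : Module.End ℤ V10 := -LinearMap.funLeft ℤ ℚ Fin.rev

/-- The map `Γ = γ₀ ⊕ γ₀ ⊕ id`, taken over `ℤ` so that lattices in `ℚ²⁶` can be invariant
submodules of it. -/
def gammaHom : Module.End ℤ V26 := gamma0Hom.prodMap (gamma0Hom.prodMap LinearMap.id)

theorem gammaHom_apply (p : V26) : gammaHom p = (gamma0 p.1, gamma0 p.2.1, p.2.2) := rfl

theorem gammaHom_involutive : Function.Involutive gammaHom := fun p => by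
  simp only [gammaHom_apply, gamma0_involutive _]

/-- The root sublattice `A₉ ⊕ A₉ ⊕ D₆` of `N(A₉²D₆)`. -/
def rootNL2 : Submodule ℤ V26 := A9.prod (A9.prod D6)

theorem rootNL2_mem_invtSubmodule_gammaHom : rootNL2 ∈ gammaHom.invtSubmodule :=
  fun _ ⟨hx, hy, hz⟩ => ⟨gamma0_mem_A9 hx, gamma0_mem_A9 hy, hz⟩

/-- The glue vectors `(2α, 4α, 0)`, `(5α, 0, δ₆)` and `(0, 5α, δ̃₆)` generating `N(A₉²D₆)` over its
root sublattice. -/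
def glueNL2 : Set V26 :=
  {((2 : ℚ) • alphaA9, (4 : ℚ) • alphaA9, 0),
   ((5 : ℚ) • alphaA9, 0, delta6),
   (0, (5 : ℚ) • alphaA9, deltaTilde6)}

theorem NL2_eq_span : NL2 = Submodule.span ℤ (rootNL2 ∪ glueNL2) := rfl

theorem exists_gammaHom_sub_smul_mem_rootNL2 {g : V26} (hg : g ∈ glueNL2) :
    ∃ c : ℤ, gammaHom g - c • g ∈ rootNL2 := by
  have hA9 : gamma0 0 - 0 ∈ A9 := gamma0_sub_self_mem_A9 (zero_mem _) (by simp)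
  have hD6 (z : V6) : z - z ∈ D6 := by
    rw [sub_self]
    exact zero_mem D6
  rcases hg with rfl | rfl | rfl
  · refine ⟨-1, ?_⟩
    rw [neg_one_smul, sub_neg_eq_add]
    exact ⟨gamma0_add_self_mem_A9 (ofNat_smul_alphaA9_mem_dualA9 2),
      gamma0_add_self_mem_A9 (ofNat_smul_alphaA9_mem_dualA9 4), add_mem (zero_mem D6) (zero_mem D6)⟩
  · refine ⟨1, ?_⟩
    rw [one_smul]
    exact ⟨gamma0_five_smul_alphaA9_sub_mem_A9, hA9, hD6 delta6⟩
  · refine ⟨1, ?_⟩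
    rw [one_smul]
    exact ⟨hA9, gamma0_five_smul_alphaA9_sub_mem_A9, hD6 deltaTilde6⟩

theorem NL2_mem_invtSubmodule_gammaHom : NL2 ∈ gammaHom.invtSubmodule :=
  NL2_eq_span ▸ span_union_mem_invtSubmodule rootNL2_mem_invtSubmodule_gammaHom
    fun _ => exists_gammaHom_sub_smul_mem_rootNL2

theorem exists_mem_NL2_gammaHom_ne : ∃ p ∈ NL2, gammaHom p ≠ p := by
  refine ⟨(Pi.single 0 1 - Pi.single 1 1, 0, 0), Submodule.subset_span (Or.inl
    ⟨single_sub_single_mem_A9 0 1, zero_mem A9, zero_mem D6⟩), fun h => ?_⟩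
  have hcoord := congrFun (congrArg Prod.fst h) 0
  simp [gammaHom_apply, gamma0] at hcoord

/-- The map `Γ = γ₀ ⊕ γ₀ ⊕ id` maps the Niemeier lattice `N(A₉²D₆)` onto
itself; it is an automorphism of `N(A₉²D₆)` of order `2`. -/
theorem gamma_preserves_NiemeierA9A9D6 :
    (fun p : V26 => (gamma0 p.1, gamma0 p.2.1, p.2.2)) '' (NL2 : Set V26) = (NL2 : Set V26) ∧
    (fun p : V26 => (gamma0 p.1, gamma0 p.2.1, p.2.2)) ∘
      (fun p : V26 => (gamma0 p.1, gamma0 p.2.1, p.2.2)) = id ∧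
    (fun p : V26 => (gamma0 p.1, gamma0 p.2.1, p.2.2)) ≠ id := by
  refine ⟨image_eq_of_involutive_of_mapsTo gammaHom_involutive NL2_mem_invtSubmodule_gammaHom,
    gammaHom_involutive.comp_self, fun h => ?_⟩
  obtain ⟨p, -, hp⟩ := exists_mem_NL2_gammaHom_ne
  exact hp (congrFun h p)
end
end

section
/- The orthogonal complement of ℤd₆ in the root lattice D₆ equals the ℤ-span of {d₅, x₃, d₃, d₂, d₁}, where x₃ = d₅+d₆+2d₄+d₃; moreover d₅ is orthogonal to x₃, d₃, d₂ and d₁, and the ℤ-span of {x₃, d₃, d₂, d₁} is isometric to the D₄ root lattice, so this orthogonal complement is isometric to A₁ ⊕ D₄. -/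
noncomputable section

abbrev V4 : Type := Fin 4 → ℚ

/-- The standard bilinear form on `ℚ⁴`. -/
def bil4 (x y : V4) : ℚ := ∑ i, x i * y i

/-- The `D₄` root lattice: integer vectors in `ℚ⁴` with even coordinate sum. -/
def D4 : Submodule ℤ V4 where
  carrier := {x | (∀ i, ∃ m : ℤ, x i = (m : ℚ)) ∧ ∃ k : ℤ, (∑ i, x i) = 2 * (k : ℚ)}
  add_mem' := by
    rintro x y ⟨hx1, kx, hx2⟩ ⟨hy1, ky, hy2⟩
    refine ⟨fun i => ?_, kx + ky, ?_⟩
    · obtain ⟨m, hm⟩ := hx1 i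
      obtain ⟨m', hm'⟩ := hy1 i
      exact ⟨m + m', by push_cast [Pi.add_apply, hm, hm']; ring⟩
    · have : (∑ i, (x + y) i) = (∑ i, x i) + ∑ i, y i := by
        simp [Pi.add_apply, Finset.sum_add_distrib]
      rw [this, hx2, hy2]; push_cast; ring
  zero_mem' := ⟨fun i => ⟨0, by simp⟩, 0, by simp⟩
  smul_mem' := by
    rintro c x ⟨hx1, k, hx2⟩
    refine ⟨fun i => ?_, c * k, ?_⟩
    · obtain ⟨m, hm⟩ := hx1 i
      refine ⟨c * m, ?_⟩
      have : (c • x) i = (c : ℚ) * x i := by simp [Pi.smul_apply, zsmul_eq_mul]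
      rw [this, hm]; push_cast; ring
    · have : (∑ i, (c • x) i) = (c : ℚ) * ∑ i, x i := by
        simp [Pi.smul_apply, zsmul_eq_mul, Finset.mul_sum]
      rw [this, hx2]; push_cast; ring

/-- The vector `x₃ = d₅ + d₆ + 2d₄ + d₃`. -/
def x3 : V6 := d5 + d6 + (2 : ℚ) • d4 + d3

/-!
In `D_{n+2}`, the lattice of integral vectors of even coordinate sum, a vector orthogonal to the
root `e_{n+1} + e_{n+2}` has opposite last two coordinates `a, -a`, so it is an integral multiple
of the root `e_{n+1} - e_{n+2}`, of norm `2`, plus a vector supported on the first `n` coordinates.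
The latter again has even coordinate sum, which gives `A₁ ⊕ D_n`. For `n = 4`, the copy of `D₄` is
spanned by its four simple roots, which are `d₁`, `d₂`, `d₃` and `x₃ = e₃ + e₄`.
-/

/-- The lattice `D_n` inside `ℚⁿ`, for every `n`: integral vectors with even coordinate sum. It is
cut out by the conditions `x i ∈ ℤ ⊂ ℚ` and `∑ i, x i ∈ 2ℤ ⊂ ℚ`. -/
def checkerboardLattice (n : ℕ) : Submodule ℤ (Fin n → ℚ) :=
  Submodule.pi Set.univ (fun _ ↦ 1) ⊓ (Submodule.span ℤ {2}).comap (∑ i, LinearMap.proj i)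

/-- The simple root `eᵢ - eᵢ₊₁`, an edge of the chain in the Dynkin diagram, with `i` counted
from `0`. -/
def chainRoot {n : ℕ} (i : Fin n) : Fin (n + 1) → ℚ :=
  Pi.single i.castSucc 1 - Pi.single i.succ 1

/-- The simple root of `D_{n+2}` that is not a `chainRoot`: the sum of the last two basis vectors
of `ℚⁿ⁺²`. -/
def forkRoot (n : ℕ) : Fin (n + 2) → ℚ :=
  Pi.single (Fin.last n).castSucc 1 + Pi.single (Fin.last (n + 1)) 1

/-- The inclusion of `ℚⁿ` in `ℚⁿ⁺²` as the first `n` coordinates. -/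
def padZeros (n : ℕ) : (Fin n → ℚ) →ₗ[ℤ] (Fin (n + 2) → ℚ) where
  toFun y := Fin.append y 0
  map_add' x y := by
    ext i
    refine Fin.addCases (fun _ ↦ ?_) (fun _ ↦ ?_) i <;> simp
  map_smul' c x := by
    ext i
    refine Fin.addCases (fun _ ↦ ?_) (fun _ ↦ ?_) i <;> simp

/-- The map `A₁ ⊕ D_n → ℚⁿ⁺²` sending the generator of `A₁` to the last root of the chain, with
`A₁` encoded as `ℤ`. -/
def embedA1D (n : ℕ) : ℤ × checkerboardLattice n →ₗ[ℤ] (Fin (n + 2) → ℚ) :=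
  (LinearMap.toSpanSingleton ℤ _ (chainRoot (Fin.last n))).coprod
    (padZeros n ∘ₗ (checkerboardLattice n).subtype)

section

variable {n : ℕ}

lemma mem_checkerboardLattice {x : Fin n → ℚ} :
    x ∈ checkerboardLattice n ↔ (∀ i, ∃ m : ℤ, x i = m) ∧ ∃ k : ℤ, ∑ i, x i = 2 * k := by
  simp [checkerboardLattice, Submodule.mem_span_singleton, Submodule.mem_one, eq_comm, mul_comm]

lemma chainRoot_mem_checkerboardLattice (i : Fin n) :
    chainRoot i ∈ checkerboardLattice (n + 1) := by
  let r : Fin (n + 1) → ℤ := Pi.single i.castSucc 1 - Pi.single i.succ 1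
  refine mem_checkerboardLattice.2 ⟨fun j ↦ ⟨r j, ?_⟩, 0, ?_⟩
  · simp [r, chainRoot, Pi.single_apply]
  · simp [chainRoot]

lemma forkRoot_mem_checkerboardLattice : forkRoot n ∈ checkerboardLattice (n + 2) := by
  let r : Fin (n + 2) → ℤ := Pi.single (Fin.last n).castSucc 1 + Pi.single (Fin.last (n + 1)) 1
  refine mem_checkerboardLattice.2 ⟨fun j ↦ ⟨r j, ?_⟩, 1, ?_⟩
  · simp [r, forkRoot, Pi.single_apply]
  · simp [forkRoot, Finset.sum_add_distrib, one_add_one_eq_two]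

lemma single_sub_single_last_mem_span_chainRoot (i : Fin (n + 1)) :
    (Pi.single i 1 - Pi.single (Fin.last n) 1 : Fin (n + 1) → ℚ) ∈
      Submodule.span ℤ (Set.range chainRoot) := by
  induction i using Fin.reverseInduction with
  | last => simp
  | cast i ih =>
    rw [← sub_add_sub_cancel _ (Pi.single i.succ 1)]
    exact add_mem (Submodule.subset_span ⟨i, rfl⟩) ih

lemma forkRoot_sub_chainRoot_last :
    forkRoot n - chainRoot (Fin.last n) = (2 : ℚ) • Pi.single (Fin.last (n + 1)) 1 := by
  rw [forkRoot, chainRoot, Fin.succ_last, two_smul]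
  abel

-- Modulo the chain roots every `eᵢ` is congruent to the last basis vector `e`, so `x` is congruent
-- to `(∑ xᵢ) e`, an integral multiple of `2 e`.
theorem checkerboardLattice_eq_span_simpleRoots :
    checkerboardLattice (n + 2) =
      Submodule.span ℤ (insert (forkRoot n) (Set.range chainRoot)) := by
  refine le_antisymm (fun x hx ↦ ?_) (Submodule.span_le.2 (Set.insert_subset
    forkRoot_mem_checkerboardLattice (Set.range_subset_iff.2 chainRoot_mem_checkerboardLattice)))
  obtain ⟨hx, k, hk⟩ := mem_checkerboardLattice.1 hx
  choose m hm using hx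
  have decomposition : x = ∑ i, m i • (Pi.single i 1 - Pi.single (Fin.last (n + 1)) 1) +
      k • (forkRoot n - chainRoot (Fin.last n)) := by
    have sum_m : ∑ i, (m i : ℚ) = 2 * k := by simpa only [hm] using hk
    have sum_single : ∑ i, m i • (Pi.single i 1 : Fin (n + 2) → ℚ) = x := by
      simp only [← Int.cast_smul_eq_zsmul ℚ, ← hm, ← Pi.single_smul', smul_eq_mul, mul_one,
        Finset.univ_sum_single]
    rw [forkRoot_sub_chainRoot_last]
    simp only [smul_sub, Finset.sum_sub_distrib, sum_single]
    simp only [← Int.cast_smul_eq_zsmul ℚ, ← Finset.sum_smul, sum_m]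
    module
  rw [decomposition]
  refine add_mem (sum_mem fun i _ ↦ Submodule.smul_mem _ _ ?_)
    (Submodule.smul_mem _ _ (sub_mem ?_ ?_))
  · exact Submodule.span_mono (Set.subset_insert _ _) (single_sub_single_last_mem_span_chainRoot i)
  · exact Submodule.subset_span (Set.mem_insert _ _)
  · exact Submodule.subset_span (Set.mem_insert_of_mem _ ⟨_, rfl⟩)

lemma append_dotProduct_append {R : Type*} [NonUnitalNonAssocSemiring R] {m : ℕ}
    (x y : Fin n → R) (a b : Fin m → R) :
    Fin.append x a ⬝ᵥ Fin.append y b = x ⬝ᵥ y + a ⬝ᵥ b := by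
  simp [dotProduct, Fin.sum_univ_add]

lemma chainRoot_last_eq_append :
    chainRoot (Fin.last n) = Fin.append (0 : Fin n → ℚ) ![1, -1] := by
  ext i
  refine Fin.addCases (m := n) (n := 2) (fun i ↦ ?_) (fun j ↦ ?_) i
  · simp [chainRoot, Fin.ext_iff, i.isLt.ne, (i.isLt.trans n.lt_succ_self).ne]
  · fin_cases j <;> simp [chainRoot, Pi.single_apply, Fin.ext_iff]

lemma forkRoot_eq_append : forkRoot n = Fin.append (0 : Fin n → ℚ) ![1, 1] := by
  ext i
  refine Fin.addCases (m := n) (n := 2) (fun i ↦ ?_) (fun j ↦ ?_) i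
  · simp [forkRoot, Fin.ext_iff, i.isLt.ne, (i.isLt.trans n.lt_succ_self).ne]
  · fin_cases j <;> simp [forkRoot, Pi.single_apply, Fin.ext_iff]

lemma chainRoot_last_dotProduct_self :
    (chainRoot (Fin.last n) ⬝ᵥ chainRoot (Fin.last n) : ℚ) = 2 := by
  simp [chainRoot_last_eq_append, append_dotProduct_append, one_add_one_eq_two]

lemma chainRoot_last_dotProduct_forkRoot : chainRoot (Fin.last n) ⬝ᵥ forkRoot n = 0 := by
  simp [chainRoot_last_eq_append, forkRoot_eq_append, append_dotProduct_append]

lemma padZeros_apply (y : Fin n → ℚ) : padZeros n y = Fin.append y 0 := rfl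

lemma padZeros_injective : Function.Injective (padZeros n) := fun x y h ↦
  funext fun i ↦ by simpa [padZeros_apply] using congrFun h (Fin.castAdd 2 i)

lemma padZeros_mem_checkerboardLattice_iff {y : Fin n → ℚ} :
    padZeros n y ∈ checkerboardLattice (n + 2) ↔ y ∈ checkerboardLattice n := by
  have integral_zero : ∃ m : ℤ, (0 : ℚ) = m := ⟨0, Int.cast_zero.symm⟩
  simp [mem_checkerboardLattice, padZeros_apply, Fin.sum_univ_add, Fin.forall_fin_add,
    integral_zero]

lemma padZeros_dotProduct_padZeros (x y : Fin n → ℚ) :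
    padZeros n x ⬝ᵥ padZeros n y = x ⬝ᵥ y := by
  simp [padZeros_apply, append_dotProduct_append]

lemma chainRoot_last_dotProduct_padZeros (y : Fin n → ℚ) :
    chainRoot (Fin.last n) ⬝ᵥ padZeros n y = 0 := by
  simp [chainRoot_last_eq_append, padZeros_apply, append_dotProduct_append]

lemma padZeros_dotProduct_forkRoot (y : Fin n → ℚ) : padZeros n y ⬝ᵥ forkRoot n = 0 := by
  simp [forkRoot_eq_append, padZeros_apply, append_dotProduct_append]

lemma embedA1D_apply (p : ℤ × checkerboardLattice n) :
    embedA1D n p = p.1 • chainRoot (Fin.last n) + padZeros n p.2 := by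
  simp [embedA1D]

theorem embedA1D_dotProduct_embedA1D (p q : ℤ × checkerboardLattice n) :
    embedA1D n p ⬝ᵥ embedA1D n q = 2 * p.1 * q.1 + (p.2 : Fin n → ℚ) ⬝ᵥ q.2 := by
  simp only [embedA1D_apply, add_dotProduct, dotProduct_add, smul_dotProduct, dotProduct_smul,
    chainRoot_last_dotProduct_self, chainRoot_last_dotProduct_padZeros,
    padZeros_dotProduct_padZeros, dotProduct_comm (padZeros n _) (chainRoot _)]
  simp only [zsmul_eq_mul]
  ring

-- The form on `A₁ ⊕ D_n` is positive definite, so preserving it forces injectivity.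
theorem embedA1D_injective : Function.Injective (embedA1D n) := by
  refine (injective_iff_map_eq_zero _).2 fun p hp ↦ ?_
  have norm_p := embedA1D_dotProduct_embedA1D p p
  rw [hp, zero_dotProduct] at norm_p
  have norm_snd_nonneg : 0 ≤ (p.2 : Fin n → ℚ) ⬝ᵥ p.2 := dotProduct_self_star_nonneg _
  have fst_eq_zero : (p.1 : ℚ) = 0 := by nlinarith
  have snd_eq_zero : (p.2 : Fin n → ℚ) = 0 := by
    rw [← dotProduct_self_eq_zero]
    simpa [fst_eq_zero] using norm_p.symm
  exact Prod.ext (by exact_mod_cast fst_eq_zero) (Subtype.ext snd_eq_zero)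

lemma eq_smul_chainRoot_last_add_padZeros {x : Fin (n + 2) → ℚ} (orth : x ⬝ᵥ forkRoot n = 0) :
    x = x (Fin.natAdd n 0) • chainRoot (Fin.last n) +
      padZeros n (fun i ↦ x (Fin.castAdd 2 i)) := by
  have antisymm : x (Fin.natAdd n 1) = -x (Fin.natAdd n 0) := by
    rw [eq_neg_iff_add_eq_zero, add_comm]
    simpa [forkRoot_eq_append, dotProduct, Fin.sum_univ_add] using orth
  ext i
  refine Fin.addCases (m := n) (n := 2) (fun i ↦ ?_) (fun j ↦ ?_) i
  · simp [chainRoot_last_eq_append, padZeros_apply]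
  · fin_cases j <;> simp [chainRoot_last_eq_append, padZeros_apply, antisymm]

theorem mem_range_embedA1D_iff {x : Fin (n + 2) → ℚ} :
    x ∈ LinearMap.range (embedA1D n) ↔
      x ∈ checkerboardLattice (n + 2) ∧ x ⬝ᵥ forkRoot n = 0 := by
  have chainRoot_mem := chainRoot_mem_checkerboardLattice (Fin.last n)
  constructor
  · rintro ⟨⟨a, y⟩, rfl⟩
    rw [embedA1D_apply]
    refine ⟨add_mem (Submodule.smul_mem _ _ chainRoot_mem)
      (padZeros_mem_checkerboardLattice_iff.2 y.2), ?_⟩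
    rw [add_dotProduct, smul_dotProduct, chainRoot_last_dotProduct_forkRoot,
      padZeros_dotProduct_forkRoot, smul_zero, add_zero]
  · rintro ⟨hx, orth⟩
    obtain ⟨a, ha⟩ := (mem_checkerboardLattice.1 hx).1 (Fin.natAdd n 0)
    have decomposition := eq_smul_chainRoot_last_add_padZeros orth
    rw [ha, Int.cast_smul_eq_zsmul] at decomposition
    have hy : (fun i ↦ x (Fin.castAdd 2 i)) ∈ checkerboardLattice n := by
      rw [← padZeros_mem_checkerboardLattice_iff, ← sub_eq_of_eq_add' decomposition]
      exact sub_mem hx (Submodule.smul_mem _ _ chainRoot_mem)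
    exact ⟨(a, ⟨_, hy⟩), (embedA1D_apply _).trans decomposition.symm⟩

lemma range_padZeros_comp_subtype :
    LinearMap.range (padZeros n ∘ₗ (checkerboardLattice n).subtype) =
      (checkerboardLattice n).map (padZeros n) := by
  rw [LinearMap.range_comp, Submodule.range_subtype]

theorem range_embedA1D :
    LinearMap.range (embedA1D n) = Submodule.span ℤ {chainRoot (Fin.last n)} ⊔
      (checkerboardLattice n).map (padZeros n) := by
  rw [embedA1D, LinearMap.range_coprod, range_padZeros_comp_subtype,
    LinearMap.range_toSpanSingleton]

end

lemma forall_zsmul_dotProduct_eq_zero_iff {ι R : Type*} [Fintype ι]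
    [NonUnitalNonAssocRing R] {x v : ι → R} :
    (∀ m, (∃ c : ℤ, m = c • v) → x ⬝ᵥ m = 0) ↔ x ⬝ᵥ v = 0 := by
  refine ⟨fun h ↦ h v ⟨1, (one_zsmul v).symm⟩, ?_⟩
  rintro h _ ⟨c, rfl⟩
  rw [dotProduct_smul, h, smul_zero]

lemma exists_linearEquiv_preserving {R M N α : Type*} [Ring R] [AddCommGroup M]
    [AddCommGroup N] [Module R M] [Module R N] {φ : M →ₗ[R] N} (hφ : Function.Injective φ)
    {S : Submodule R N} (hS : LinearMap.range φ = S) {B : N → N → α} {B' : M → M → α}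
    (hB : ∀ p q, B (φ p) (φ q) = B' p q) :
    ∃ f : S ≃ₗ[R] M, ∀ u v : S, B u v = B' (f u) (f v) := by
  subst hS
  let e := LinearEquiv.ofInjective φ hφ
  have apply_symm (u : LinearMap.range φ) : φ (e.symm u) = u :=
    congrArg Subtype.val (e.apply_symm_apply u)
  exact ⟨e.symm, fun u v ↦ by rw [← hB, apply_symm, apply_symm]⟩

lemma D6_eq_checkerboardLattice : D6 = checkerboardLattice 6 :=
  Submodule.ext fun _ ↦ mem_checkerboardLattice.symm

lemma D4_eq_checkerboardLattice : D4 = checkerboardLattice 4 :=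
  Submodule.ext fun _ ↦ mem_checkerboardLattice.symm

lemma d5_eq_chainRoot : d5 = chainRoot (Fin.last 4) := by
  ext i
  fin_cases i <;> simp [d5, chainRoot, Fin.ext_iff]

lemma d6_eq_forkRoot : d6 = forkRoot 4 := by
  ext i
  fin_cases i <;> simp [d6, forkRoot, Fin.ext_iff]

lemma padZeros_forkRoot_two : padZeros 4 (forkRoot 2) = x3 := by
  ext i
  fin_cases i <;>
    norm_num [padZeros_apply, x3, d3, d4, d5, d6, forkRoot, Fin.append, Fin.addCases,
      Pi.single_apply, Fin.ext_iff]

lemma padZeros_comp_chainRoot : padZeros 4 ∘ chainRoot = ![d1, d2, d3] := by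
  ext j i
  fin_cases j <;> fin_cases i <;>
    simp [padZeros_apply, d1, d2, d3, chainRoot, Fin.append, Fin.addCases]

lemma map_padZeros_checkerboardLattice_four :
    (checkerboardLattice 4).map (padZeros 4) = Submodule.span ℤ {x3, d3, d2, d1} := by
  have range_chain : Set.range ![d1, d2, d3] = {d3, d2, d1} := by
    ext v
    simp only [Matrix.range_cons, Matrix.range_empty, Set.union_empty, Set.mem_union,
      Set.mem_singleton_iff, Set.mem_insert_iff]
    tauto
  rw [checkerboardLattice_eq_span_simpleRoots, Submodule.map_span, Set.image_insert_eq,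
    ← Set.range_comp, padZeros_forkRoot_two, padZeros_comp_chainRoot, range_chain]

lemma range_embedA1D_four :
    LinearMap.range (embedA1D 4) = Submodule.span ℤ {d5, x3, d3, d2, d1} := by
  rw [range_embedA1D, map_padZeros_checkerboardLattice_four, ← d5_eq_chainRoot,
    ← Submodule.span_insert]

lemma bil6_d5_eq_zero_of_mem_span {v : V6} (hv : v ∈ Submodule.span ℤ {x3, d3, d2, d1}) :
    bil6 d5 v = 0 := by
  rw [← map_padZeros_checkerboardLattice_four] at hv
  obtain ⟨y, -, rfl⟩ := hv
  rw [d5_eq_chainRoot]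
  exact chainRoot_last_dotProduct_padZeros y

/-- The orthogonal complement of `ℤd₆` in `D₆` is the `ℤ`-span of
`{d₅, x₃, d₃, d₂, d₁}`; `d₅` is orthogonal to `x₃, d₃, d₂, d₁`; the span of
`{x₃, d₃, d₂, d₁}` is isometric to the `D₄` root lattice, and the whole complement is
isometric to `A₁ ⊕ D₄` (where `A₁` is `ℤ` with the form `(x,y) ↦ 2xy`). -/
theorem orthogonal_complement_of_d6_in_D6 :
    {x : V6 | x ∈ D6 ∧ ∀ m : V6, (∃ c : ℤ, m = c • d6) → bil6 x m = 0} =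
      (Submodule.span ℤ ({d5, x3, d3, d2, d1} : Set V6) : Set V6) ∧
    bil6 d5 x3 = 0 ∧ bil6 d5 d3 = 0 ∧ bil6 d5 d2 = 0 ∧ bil6 d5 d1 = 0 ∧
    (∃ f : Submodule.span ℤ ({x3, d3, d2, d1} : Set V6) ≃ₗ[ℤ] D4,
      ∀ u v : Submodule.span ℤ ({x3, d3, d2, d1} : Set V6),
        bil4 (f u) (f v) = bil6 (u : V6) (v : V6)) ∧
    (∃ F : Submodule.span ℤ ({d5, x3, d3, d2, d1} : Set V6) ≃ₗ[ℤ] (ℤ × D4),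
      ∀ u v : Submodule.span ℤ ({d5, x3, d3, d2, d1} : Set V6),
        bil6 (u : V6) (v : V6) =
          2 * ((F u).1 : ℚ) * ((F v).1 : ℚ) + bil4 ((F u).2 : V4) ((F v).2 : V4)) := by
  rw [D4_eq_checkerboardLattice]
  have d5_orth (v : V6) (hv : v ∈ ({x3, d3, d2, d1} : Set V6)) : bil6 d5 v = 0 :=
    bil6_d5_eq_zero_of_mem_span (Submodule.subset_span hv)
  refine ⟨?_, d5_orth x3 (by simp), d5_orth d3 (by simp), d5_orth d2 (by simp),
    d5_orth d1 (by simp), ?_, ?_⟩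
  · ext x
    rw [← range_embedA1D_four, SetLike.mem_coe, mem_range_embedA1D_iff, Set.mem_ofPred_eq,
      D6_eq_checkerboardLattice, ← d6_eq_forkRoot]
    exact and_congr_right' forall_zsmul_dotProduct_eq_zero_iff
  · obtain ⟨f, hf⟩ := exists_linearEquiv_preserving (R := ℤ)
      (φ := padZeros 4 ∘ₗ (checkerboardLattice 4).subtype)
      (padZeros_injective.comp (checkerboardLattice 4).injective_subtype)
      (range_padZeros_comp_subtype.trans map_padZeros_checkerboardLattice_four)
      fun _ _ ↦ padZeros_dotProduct_padZeros _ _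
    exact ⟨f, fun u v ↦ (hf u v).symm⟩
  · exact exists_linearEquiv_preserving embedA1D_injective range_embedA1D_four
      embedA1D_dotProduct_embedA1D
end
end

section
/- Let L = N(D₆⁴), let T be the sublattice {(x, c·d₆, 0, 0) : x ∈ i₁(A₅), c ∈ ℤ} of L (the embedded copy of A₅ ⊕ A₁), let W be the orthogonal complement of T in L and N the orthogonal complement of T in D₆⊕D₆⊕D₆⊕D₆. Then the quotient group W/N is isomorphic to (ℤ/2ℤ)³. -/
noncomputable section

/-- The orthogonal complement (in `ℚ²⁴`, as a `ℤ`-submodule) of a set `S`. -/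
def orth24 (S : Set V24) : Submodule ℤ V24 where
  carrier := {x | ∀ t ∈ S, bil24 x t = 0}
  add_mem' := by
    intro x y hx hy t ht
    have h : bil24 (x + y) t = bil24 x t + bil24 y t := by
      simp [bil24, bil6, Pi.add_apply, add_mul, Finset.sum_add_distrib]
    rw [h, hx t ht, hy t ht, add_zero]
  zero_mem' := by intro t ht; simp [bil24, bil6]
  smul_mem' := by
    intro c x hx t ht
    have h : bil24 (c • x) t = (c : ℚ) * bil24 x t := by
      simp [bil24, bil6, Pi.smul_apply, zsmul_eq_mul, Finset.mul_sum, mul_assoc]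
    rw [h, hx t ht, mul_zero]

/-- The embedded copy `T = {(x, c·d₆, 0, 0) : x ∈ i₁(A₅), c ∈ ℤ}` of `A₅ ⊕ A₁` in `N(D₆⁴)`. -/
def Tset : Set V24 := {x | x 0 ∈ i1A5 ∧ (∃ c : ℤ, x 1 = c • d6) ∧ x 2 = 0 ∧ x 3 = 0}

/-- `W`, the orthogonal complement of `T` in the Niemeier lattice `N(D₆⁴)`. -/
def W10 : Submodule ℤ V24 := NL ⊓ orth24 Tset

/-- `N`, the orthogonal complement of `T` in the root lattice `D₆ ⊕ D₆ ⊕ D₆ ⊕ D₆`. -/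
def Nsub : Submodule ℤ V24 :=
  (Submodule.pi Set.univ fun _ : Fin 4 => D6) ⊓ orth24 Tset

/-!
A vector of `(D₆*)⁴` lies in `N(D₆⁴)` exactly when its class in `(D₆*/D₆)⁴ ≅ 𝔽₄⁴` lies in the
glue code, a two-dimensional `𝔽₄`-code whose words are determined by their first two letters. Hence
`W/N` is the group of glue classes of vectors of `N(D₆⁴)` orthogonal to `T`. Orthogonality to
`i₁(A₅)` makes the first component a multiple of `(1, …, 1)`, so that its class lies in the
`𝔽₂`-line `{[0], [1]}`, while every class of `D₆*/D₆` has a representative orthogonal to `d₆`. So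
the first letter contributes `𝔽₂`, the second `𝔽₂²`, and the other two are determined.
-/

open LinearMap (BilinForm)

section DualPairing

variable {K V : Type*} [Field K] [CharZero K] [AddCommGroup V] [Module K V] {L : Submodule ℤ V}

/-- The pairing of the dual lattice of `L` with a fixed vector of `L`, reduced modulo `n`. -/
def pairingMod (B : BilinForm K V) (n : ℕ) (v : L) : B.dualSubmodule L →ₗ[ℤ] ZMod n :=
  (Int.castAddHom (ZMod n)).toIntLinearMap ∘ₗ LinearMap.applyₗ v ∘ₗ B.dualSubmoduleToDual L

theorem pairingMod_apply_of_eq_intCast {B : BilinForm K V} {v : L} {y : B.dualSubmodule L} {m : ℤ}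
    (n : ℕ) (h : B y v = m) : pairingMod B n v y = m := by
  have hm : B.dualSubmoduleParing y v = m :=
    Int.cast_injective (α := K) ((B.dualSubmoduleParing_spec y v).trans h)
  simp [pairingMod, hm]

theorem pairingMod_eq_zero_iff {B : BilinForm K V} {n : ℕ} {v : L} {y : B.dualSubmodule L} :
    pairingMod B n v y = 0 ↔ ∃ k : ℤ, B y v = n * k := by
  obtain ⟨m, hm⟩ := Submodule.mem_one.mp (y.2 v v.2)
  replace hm : B y v = m := hm.symm
  rw [pairingMod_apply_of_eq_intCast n hm, ZMod.intCast_zmod_eq_zero_iff_dvd, hm]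
  exact exists_congr fun k => by norm_cast

end DualPairing

/-- `bil6` as a bundled bilinear form, giving access to dual lattices. -/
def dotForm : BilinForm ℚ V6 := dotProductBilin ℚ ℚ

theorem dotForm_apply (x y : V6) : dotForm x y = ∑ i, x i * y i := rfl

theorem bil6_eq_dotForm (x y : V6) : bil6 x y = dotForm x y := rfl

theorem mem_D6_iff {y : V6} :
    y ∈ D6 ↔ ∃ z : Fin 6 → ℤ, Even (∑ i, z i) ∧ y = fun i => (z i : ℚ) := by
  constructor
  · rintro ⟨hy, k, hk⟩
    choose z hz using hy
    refine ⟨z, even_iff_two_dvd.mpr ⟨k, ?_⟩, funext hz⟩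
    simp only [hz] at hk
    exact_mod_cast hk
  · rintro ⟨z, hz, rfl⟩
    obtain ⟨k, hk⟩ := even_iff_two_dvd.mp hz
    exact ⟨fun i => ⟨z i, rfl⟩, k, by dsimp only; exact_mod_cast hk⟩

theorem intCast_mem_D6 {z : Fin 6 → ℤ} (hz : Even (∑ i, z i)) : (fun i => (z i : ℚ)) ∈ D6 :=
  mem_D6_iff.mpr ⟨z, hz, rfl⟩

theorem two_single_zero_mem_D6 : (Pi.single 0 2 : V6) ∈ D6 := by
  convert intCast_mem_D6 (z := Pi.single 0 2) (by simp) using 2 with i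
  simp [Pi.single_apply]

theorem one_mem_D6 : (1 : V6) ∈ D6 := by
  convert intCast_mem_D6 (z := 1) (by decide) using 2
  simp

theorem single_sub_single_zero_mem_D6 (i : Fin 6) : (Pi.single i 1 - Pi.single 0 1 : V6) ∈ D6 := by
  convert intCast_mem_D6 (z := Pi.single i 1 - Pi.single 0 1) (by simp) using 2 with j
  simp [Pi.single_apply]

/-- The dual lattice `D₆*`. -/
abbrev D6Dual : Submodule ℤ V6 := dotForm.dualSubmodule D6

theorem mem_D6Dual_iff {y : V6} :
    y ∈ D6Dual ↔ (∃ h : ℤ, 2 * y 0 = h) ∧ ∀ i, ∃ m : ℤ, y i - y 0 = m := by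
  simp only [BilinForm.mem_dualSubmodule, Submodule.mem_one, eq_intCast, dotForm_apply]
  constructor
  · intro hy
    constructor
    · obtain ⟨h, hh⟩ := hy _ two_single_zero_mem_D6
      exact ⟨h, by simp [hh, Pi.single_apply, mul_comm]⟩
    · intro i
      obtain ⟨m, hm⟩ := hy _ (single_sub_single_zero_mem_D6 i)
      exact ⟨m, by simp [hm, Pi.single_apply, mul_sub]⟩
  · rintro ⟨⟨h, hh⟩, hm⟩ _ hv
    obtain ⟨z, hz, rfl⟩ := mem_D6_iff.mp hv
    obtain ⟨k, hk⟩ := even_iff_two_dvd.mp hz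
    choose m hm using hm
    refine ⟨∑ i, m i * z i + h * k, ?_⟩
    have hk' : ∑ i, (z i : ℚ) = 2 * k := by exact_mod_cast hk
    calc ((∑ i, m i * z i + h * k : ℤ) : ℚ)
        = ∑ i, (y i - y 0) * z i + y 0 * ∑ i, (z i : ℚ) := by
          simp only [hm, hk']; push_cast; rw [← hh]; ring
      _ = ∑ i, y i * z i := by
          rw [Finset.mul_sum, ← Finset.sum_add_distrib]
          exact Finset.sum_congr rfl fun i _ => by ring

theorem D6_le_D6Dual : D6 ≤ D6Dual := by
  rintro _ hy
  obtain ⟨z, -, rfl⟩ := mem_D6_iff.mp hy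
  exact mem_D6Dual_iff.mpr ⟨⟨2 * z 0, by simp⟩, fun i => ⟨z i - z 0, by simp⟩⟩

/-- The discriminant group `D₆*/D₆`, identified with `𝔽₂²` through `discr`. -/
abbrev Discr : Type := ZMod 2 × ZMod 2

/-- The class of a vector of `D₆*` in `D₆*/D₆`, given by its pairings modulo `2` with the vectors
`(2, 0, …, 0)` and `(1, …, 1)` of `D₆`. -/
def discr : D6Dual →ₗ[ℤ] Discr :=
  (pairingMod dotForm 2 ⟨_, two_single_zero_mem_D6⟩).prod (pairingMod dotForm 2 ⟨_, one_mem_D6⟩)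

theorem discr_apply {y : D6Dual} {h s : ℤ} (hh : 2 * y.1 0 = h) (hs : ∑ i, y.1 i = s) :
    discr y = (↑h, ↑s) :=
  Prod.ext
    (pairingMod_apply_of_eq_intCast 2 (by simp [dotForm_apply, Pi.single_apply, ← hh, mul_comm]))
    (pairingMod_apply_of_eq_intCast 2 (by simp [dotForm_apply, hs]))

theorem discr_eq_zero_iff {y : D6Dual} : discr y = 0 ↔ y.1 ∈ D6 := by
  simp only [discr, LinearMap.prod_apply, Function.prod_apply, Prod.mk_eq_zero,
    pairingMod_eq_zero_iff, dotForm_apply]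
  constructor
  · rintro ⟨⟨h, hh⟩, k, hk⟩
    refine ⟨fun i => ?_, k, by simpa using hk⟩
    obtain ⟨m, hm⟩ := (mem_D6Dual_iff.mp y.2).2 i
    have h0 : y.1 0 * 2 = 2 * h := by simpa [Pi.single_apply] using hh
    exact ⟨m + h, by push_cast; linarith⟩
  · rintro ⟨hy, k, hk⟩
    obtain ⟨m, hm⟩ := hy 0
    exact ⟨⟨m, by simp [Pi.single_apply, hm, mul_comm]⟩, k, by simp [hk]⟩

theorem gam_eq :
    gam = ![0, fun _ => 1/2, ![1, 0, 0, 0, 0, 0], ![1/2, 1/2, 1/2, 1/2, 1/2, -1/2]] := by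
  ext c i
  fin_cases c <;> fin_cases i <;>
    norm_num [gam, delta6, deltaBar6, deltaTilde6, d1, d2, d3, d4, d5, d6]

theorem gam_mem_D6Dual (c : Fin 4) : gam c ∈ D6Dual := by
  refine mem_D6Dual_iff.mpr ⟨⟨![0, 1, 2, 1] c, ?_⟩, fun i => ⟨(![0, 0,
    ![0, -1, -1, -1, -1, -1], ![0, 0, 0, 0, 0, -1]] : Fin 4 → Fin 6 → ℤ) c i, ?_⟩⟩
  · fin_cases c <;> simp [gam_eq]
  · fin_cases c <;> fin_cases i <;> norm_num [gam_eq]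

/-- The glue vector `γ_c` as an element of `D₆*`. -/
def glueVec (c : Fin 4) : D6Dual := ⟨gam c, gam_mem_D6Dual c⟩

/-- The discriminant class `[c]` of the glue vector `γ_c`. -/
def glueLabel : Fin 4 → Discr := ![(0, 0), (1, 1), (0, 1), (1, 0)]

theorem discr_glueVec (c : Fin 4) : discr (glueVec c) = glueLabel c := by
  have h : discr (glueVec c) =
      (((![0, 1, 2, 1] c : ℤ) : ZMod 2), ((![0, 3, 1, 2] c : ℤ) : ZMod 2)) := by
    apply discr_apply <;> fin_cases c <;> norm_num [glueVec, gam_eq, Fin.sum_univ_succ]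
  rw [h]
  fin_cases c <;> decide

/-- Multiplication by a primitive cube root of unity `ω` on `𝔽₂² ≅ 𝔽₄`; it permutes the
discriminant classes by `[1] ↦ [2] ↦ [3] ↦ [1]`. -/
def mulOmega : Discr →ₗ[ℤ] Discr :=
  (LinearMap.fst ℤ _ _ + LinearMap.snd ℤ _ _).prod (LinearMap.fst ℤ _ _)

/-- The glue code of `N(D₆⁴)`, as the `[4, 2]` code over `𝔽₄` with parity checks
`z₂ = ω² z₀ + ω z₁` and `z₃ = ω z₀ + ω² z₁`. -/
def glueCode : Submodule ℤ (Fin 4 → Discr) where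
  carrier := {z | z 2 = mulOmega (mulOmega (z 0)) + mulOmega (z 1) ∧
    z 3 = mulOmega (z 0) + mulOmega (mulOmega (z 1))}
  zero_mem' := by simp
  add_mem' := by
    rintro z w ⟨hz2, hz3⟩ ⟨hw2, hw3⟩
    simp only [Set.mem_ofPred_eq, Pi.add_apply, map_add, hz2, hz3, hw2, hw3]
    constructor <;> abel
  smul_mem' := by
    rintro a z ⟨hz2, hz3⟩
    simp only [Set.mem_ofPred_eq, Pi.smul_apply, map_smul, hz2, hz3, smul_add, and_self]

theorem mem_glueCode_iff {z : Fin 4 → Discr} :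
    z ∈ glueCode ↔ z 2 = mulOmega (mulOmega (z 0)) + mulOmega (z 1) ∧
      z 3 = mulOmega (z 0) + mulOmega (mulOmega (z 1)) := Iff.rfl

theorem eq_zero_of_mem_glueCode {z : Fin 4 → Discr} (hz : z ∈ glueCode) (h0 : z 0 = 0)
    (h1 : z 1 = 0) : z = 0 := by
  obtain ⟨h2, h3⟩ := mem_glueCode_iff.mp hz
  simp only [h0, h1, map_zero, add_zero] at h2 h3
  ext1 k
  fin_cases k <;> assumption

theorem glueLabel_comp_mem_glueCode {c : Fin 4 → Fin 4} (hc : c ∈ codes) :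
    glueLabel ∘ c ∈ glueCode := by
  rw [mem_glueCode_iff]
  rcases hc with rfl | rfl | rfl | rfl | rfl | rfl | rfl | rfl | rfl | rfl | rfl | rfl | rfl |
    rfl | rfl | rfl <;> decide

theorem glueLabel_surjective : Function.Surjective glueLabel := by decide

theorem exists_mem_codes_eq (a b : Fin 4) : ∃ c ∈ codes, c 0 = a ∧ c 1 = b := by
  simp only [codes, Set.mem_insert_iff, Set.mem_singleton_iff, exists_eq_or_imp, exists_eq_left]
  fin_cases a <;> fin_cases b <;> simp

/-- The inclusion `(D₆*)⁴ ⊂ ℚ²⁴`. -/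
abbrev dualIncl : (Fin 4 → D6Dual) →ₗ[ℤ] V24 := D6Dual.subtype.compLeft (Fin 4)

/-- The class of a vector of `(D₆*)⁴` in `(D₆*/D₆)⁴`. -/
abbrev glueClass : (Fin 4 → D6Dual) →ₗ[ℤ] Fin 4 → Discr := discr.compLeft (Fin 4)

theorem glueClass_eq_zero_iff {y : Fin 4 → D6Dual} : glueClass y = 0 ↔ ∀ k, (y k).1 ∈ D6 :=
  funext_iff.trans (forall_congr' fun _ => discr_eq_zero_iff)

theorem glueClass_glueVec_comp (c : Fin 4 → Fin 4) : glueClass (glueVec ∘ c) = glueLabel ∘ c :=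
  funext fun k => discr_glueVec (c k)

theorem exists_mem_codes_glueLabel_comp_eq {z : Fin 4 → Discr} (hz : z ∈ glueCode) :
    ∃ c ∈ codes, glueLabel ∘ c = z := by
  obtain ⟨a, ha⟩ := glueLabel_surjective (z 0)
  obtain ⟨b, hb⟩ := glueLabel_surjective (z 1)
  obtain ⟨c, hc, rfl, rfl⟩ := exists_mem_codes_eq a b
  refine ⟨c, hc, sub_eq_zero.mp ?_⟩
  exact eq_zero_of_mem_glueCode (sub_mem (glueLabel_comp_mem_glueCode hc) hz)
    (sub_eq_zero.mpr ha) (sub_eq_zero.mpr hb)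

theorem NL_eq_map_comap_glueCode : NL = (glueCode.comap glueClass).map dualIncl := by
  apply le_antisymm
  · refine Submodule.span_le.mpr ?_
    rintro _ (hx | ⟨c, hc, rfl⟩)
    · refine ⟨fun k => ⟨_, D6_le_D6Dual (hx k)⟩, ?_, rfl⟩
      have hclass : glueClass (fun k => ⟨_, D6_le_D6Dual (hx k)⟩) = 0 :=
        glueClass_eq_zero_iff.mpr hx
      rw [SetLike.mem_coe, Submodule.mem_comap, hclass]
      exact zero_mem glueCode
    · refine ⟨glueVec ∘ c, ?_, rfl⟩
      rw [SetLike.mem_coe, Submodule.mem_comap, glueClass_glueVec_comp]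
      exact glueLabel_comp_mem_glueCode hc
  · rintro _ ⟨y, hy, rfl⟩
    obtain ⟨c, hc, hcy⟩ := exists_mem_codes_glueLabel_comp_eq hy
    have hroot : glueClass (y - glueVec ∘ c) = 0 := by
      rw [map_sub, glueClass_glueVec_comp, hcy, sub_self]
    rw [← sub_add_cancel y (glueVec ∘ c), map_add]
    exact add_mem (Submodule.subset_span (.inl (glueClass_eq_zero_iff.mp hroot)))
      (Submodule.subset_span (.inr ⟨c, hc, rfl⟩))

theorem apply_mem_D6Dual_of_mem_NL {x : V24} (hx : x ∈ NL) (k : Fin 4) : x k ∈ D6Dual := by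
  rw [NL_eq_map_comap_glueCode] at hx
  obtain ⟨y, -, rfl⟩ := hx
  exact (y k).2

theorem dualIncl_injective : Function.Injective dualIncl :=
  Subtype.val_injective.comp_left

theorem dualIncl_mem_NL_iff {y : Fin 4 → D6Dual} : dualIncl y ∈ NL ↔ glueClass y ∈ glueCode := by
  rw [NL_eq_map_comap_glueCode, ← SetLike.mem_coe, Submodule.map_coe,
    dualIncl_injective.mem_set_image, SetLike.mem_coe, Submodule.mem_comap]

theorem sum_eq_zero_of_mem_i1A5 {t : V6} (ht : t ∈ i1A5) : ∑ i, t i = 0 := by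
  have hle : i1A5 ≤ LinearMap.ker (∑ i, LinearMap.proj i : V6 →ₗ[ℤ] ℚ) := by
    refine Submodule.span_le.mpr ?_
    rintro _ (rfl | rfl | rfl | rfl | rfl) <;>
      simp [Fin.sum_univ_succ, d1, d2, d3, d4, d5]
  simpa using hle ht

theorem forall_mem_i1A5_bil6_eq_zero_iff {y : V6} :
    (∀ t ∈ i1A5, bil6 y t = 0) ↔ ∀ i, y i = y 0 := by
  constructor
  · intro hy
    have hgen (d : V6) (hd : d ∈ ({d1, d2, d3, d4, d5} : Set V6)) : bil6 y d = 0 :=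
      hy d (Submodule.subset_span hd)
    simp only [Set.forall_mem_insert, Set.mem_singleton_iff, forall_eq] at hgen
    obtain ⟨h01, h12, h23, h34, h45⟩ :
        y 0 = y 1 ∧ y 1 = y 2 ∧ y 2 = y 3 ∧ y 3 = y 4 ∧ y 4 = y 5 := by
      simpa [bil6, Fin.sum_univ_succ, d1, d2, d3, d4, d5, add_neg_eq_zero] using hgen
    intro i
    fin_cases i <;> simp [h01, h12, h23, h34, h45]
  · intro hy t ht
    simp only [bil6, hy, ← Finset.mul_sum, sum_eq_zero_of_mem_i1A5 ht, mul_zero]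

theorem mem_orth24_Tset_iff {x : V24} :
    x ∈ orth24 Tset ↔ (∀ i, x 0 i = x 0 0) ∧ bil6 (x 1) d6 = 0 := by
  rw [← forall_mem_i1A5_bil6_eq_zero_iff]
  constructor
  · intro hx
    constructor
    · intro t ht
      simpa [bil24, bil6, Fin.sum_univ_four] using
        hx ![t, 0, 0, 0] ⟨ht, ⟨0, by simp⟩, rfl, rfl⟩
    · simpa [bil24, bil6, Fin.sum_univ_four] using
        hx ![0, d6, 0, 0] ⟨zero_mem _, ⟨1, by simp⟩, rfl, rfl⟩
  · rintro ⟨h0, h1⟩ t ⟨ht0, ⟨c, ht1⟩, ht2, ht3⟩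
    have h1t : bil6 (x 1) (t 1) = 0 := by
      rw [ht1, bil6_eq_dotForm, map_zsmul, ← bil6_eq_dotForm, h1, smul_zero]
    rw [bil24, Fin.sum_univ_four, h0 _ ht0, h1t, ht2, ht3]
    simp [bil6_eq_dotForm]

theorem discr_snd_eq_fst_of_const {y : D6Dual} (hy : ∀ i, y.1 i = y.1 0) :
    (discr y).2 = (discr y).1 := by
  obtain ⟨h, hh⟩ := (mem_D6Dual_iff.mp y.2).1
  have hsum : ∑ i, y.1 i = ((3 * h : ℤ) : ℚ) := by
    simp only [hy, Finset.sum_const, Finset.card_univ, Fintype.card_fin, nsmul_eq_mul]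
    push_cast
    linear_combination 3 * hh
  have three : (3 : ZMod 2) = 1 := rfl
  simp [discr_apply hh hsum, three]

theorem exists_const_discr_fst_eq (a : ZMod 2) :
    ∃ y : D6Dual, (∀ i, y.1 i = y.1 0) ∧ (discr y).1 = a := by
  obtain ⟨n, rfl⟩ := ZMod.intCast_surjective a
  exact ⟨n • glueVec 1, by simp [glueVec, gam_eq], by simp [discr_glueVec, glueLabel]⟩

theorem bil6_d6 (y : V6) : bil6 y d6 = y 4 + y 5 := by
  simp [bil6, Fin.sum_univ_succ, d6]

theorem exists_orthogonal_d6_discr_eq (z : Discr) :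
    ∃ y : D6Dual, bil6 y.1 d6 = 0 ∧ discr y = z := by
  obtain ⟨a, b⟩ := z
  obtain ⟨m, rfl⟩ := ZMod.intCast_surjective a
  obtain ⟨n, rfl⟩ := ZMod.intCast_surjective b
  exact ⟨m • glueVec 3 + n • glueVec 2, by simp [bil6_d6, glueVec, gam_eq, neg_div],
    by simp [discr_glueVec, glueLabel]⟩

theorem discr_surjective : Function.Surjective discr := fun z =>
  let ⟨y, _, hy⟩ := exists_orthogonal_d6_discr_eq z
  ⟨y, hy⟩

/-- The inclusion of `W` into `(D₆*)⁴`. -/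
def dualComponents : W10 →ₗ[ℤ] Fin 4 → D6Dual :=
  LinearMap.pi fun k => (LinearMap.proj k).restrict fun _ hx => apply_mem_D6Dual_of_mem_NL hx.1 k

/-- The map `W → 𝔽₂³` inducing the isomorphism: the class of the second component, together with
the only free coordinate of the class of the first component, which lies in `{[0], [1]}`. -/
def wClass : W10 →ₗ[ℤ] ZMod 2 × Discr :=
  ((LinearMap.fst ℤ _ _ ∘ₗ LinearMap.proj 0).prod (LinearMap.proj 1)) ∘ₗ
    glueClass ∘ₗ dualComponents

theorem wClass_apply (x : W10) :
    wClass x = ((discr (dualComponents x 0)).1, discr (dualComponents x 1)) := rfl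

theorem ker_wClass : LinearMap.ker wClass = Nsub.comap W10.subtype := by
  ext x
  have hN : x.1 ∈ Nsub ↔ glueClass (dualComponents x) = 0 := by
    rw [glueClass_eq_zero_iff]
    exact ⟨fun h k => h.1 k trivial, fun h => ⟨fun k _ => h k, x.2.2⟩⟩
  rw [LinearMap.mem_ker, Submodule.mem_comap, Submodule.subtype_apply, hN, wClass_apply,
    Prod.mk_eq_zero]
  constructor
  · rintro ⟨h0, h1⟩
    have hcode : glueClass (dualComponents x) ∈ glueCode := dualIncl_mem_NL_iff.mp x.2.1
    have hline : (discr (dualComponents x 0)).2 = (discr (dualComponents x 0)).1 :=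
      discr_snd_eq_fst_of_const (mem_orth24_Tset_iff.mp x.2.2).1
    exact eq_zero_of_mem_glueCode hcode (Prod.ext h0 (hline.trans h0)) h1
  · intro h
    exact ⟨congrArg Prod.fst (congrFun h 0), congrFun h 1⟩

theorem wClass_surjective : Function.Surjective wClass := by
  rintro ⟨a, z⟩
  obtain ⟨y₀, hconst, ha⟩ := exists_const_discr_fst_eq a
  obtain ⟨y₁, horth, hz⟩ := exists_orthogonal_d6_discr_eq z
  obtain ⟨y₂, h₂⟩ := discr_surjective (mulOmega (mulOmega (discr y₀)) + mulOmega z)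
  obtain ⟨y₃, h₃⟩ := discr_surjective (mulOmega (discr y₀) + mulOmega (mulOmega z))
  have hcode : glueClass ![y₀, y₁, y₂, y₃] ∈ glueCode := by
    subst hz
    exact mem_glueCode_iff.mpr ⟨h₂, h₃⟩
  exact ⟨⟨dualIncl ![y₀, y₁, y₂, y₃], dualIncl_mem_NL_iff.mpr hcode,
    mem_orth24_Tset_iff.mpr ⟨hconst, horth⟩⟩, Prod.ext ha hz⟩

/-- For the embedding `(i₁(A₅), d₆, 0, 0)` of `A₅ ⊕ A₁` in `N(D₆⁴)`,
the quotient `W/N` is isomorphic to `(ℤ/2ℤ)³`. -/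
theorem W_quotient_N_eq_Z2_cubed :
    Nonempty ((↥W10 ⧸ Nsub.comap W10.subtype) ≃+ (ZMod 2 × ZMod 2 × ZMod 2)) :=
  ⟨((Submodule.quotEquivOfEq _ _ ker_wClass.symm).trans
    (wClass.quotKerEquivOfSurjective wClass_surjective)).toAddEquiv⟩
end
end
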